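/- For n ≥ 2, let G ∈ G_{n,n+3} be a weak subdivision of the triangular prism Π₃ that is not also a weak subdivision of K_{3,3} (equivalently, all three of its rung chains have positive length). Then there exists a weak K_{3,3}-subdivision G′ ∈ G_{n,n+3} such that d_2(G′) ≤ d_2(G), d_3(G′) < d_3(G) and d_4(G′) < d_4(G); in particular, G is not p-optimal for any p ∈ (0,1). -/

import Mathlib

open Classical Finset

noncomputable section

/-- A finite multigraph: edges carry two (possibly equal) endpoints. -/
structure Multigraph where
  V : Type
  E : Type
  [fintV : Fintype V]
  [fintE : Fintype E]
  src : E → V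
  tgt : E → V

attribute [instance] Multigraph.fintV Multigraph.fintE

namespace Multigraph

variable (G : Multigraph)

/-- Number of vertices. -/
def nV : ℕ := Fintype.card G.V

/-- Number of edges (with multiplicity). -/
def nE : ℕ := Fintype.card G.E

/-- One step along an edge belonging to the edge set `S`. -/
def stepOn (S : Finset G.E) (u v : G.V) : Prop :=
  ∃ e ∈ S, (G.src e = u ∧ G.tgt e = v) ∨ (G.src e = v ∧ G.tgt e = u)

/-- The spanning subgraph with edge set `S` is connected. -/
def ConnOn (S : Finset G.E) : Prop :=
  ∀ u v : G.V, Relation.ReflTransGen (G.stepOn S) u v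

/-- `G` is connected. -/
def Connected : Prop := G.ConnOn Finset.univ

/-- The edge set `F` disconnects `G` (i.e. is a disconnection). -/
def Disconnects (F : Finset G.E) : Prop := ¬ G.ConnOn (Finset.univ \ F)

/-- `d i G`: the number of `i`-disconnections of `G`. -/
def d (i : ℕ) : ℕ :=
  ((Finset.univ : Finset (Finset G.E)).filter fun F => F.card = i ∧ G.Disconnects F).card

/-- The all-terminal reliability `R(G,p)`: each edge is independently retained with
probability `p`; this is the probability that the retained spanning subgraph is connected. -/
def rel (p : ℝ) : ℝ :=
  ∑ S : Finset G.E, if G.ConnOn S then p ^ S.card * (1 - p) ^ (G.nE - S.card) else 0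

/-- `e` is a bridge. -/
def IsBridge (e : G.E) : Prop := G.Disconnects {e}

def Bridgeless : Prop := ∀ e : G.E, ¬ G.IsBridge e

/-- The number of spanning trees of `G` (connected spanning subgraphs with `nV - 1` edges). -/
def treeCount : ℕ :=
  ((Finset.univ : Finset (Finset G.E)).filter fun S => S.card + 1 = G.nV ∧ G.ConnOn S).card

/-- The edge-connectivity: the least size of a disconnecting set of edges. -/
def edgeConnectivity : ℕ :=
  sInf {i : ℕ | ∃ F : Finset G.E, F.card = i ∧ G.Disconnects F}

/-- Degree of a vertex (a loop counts twice). -/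
def deg (v : G.V) : ℕ :=
  (Finset.univ.filter fun e => G.src e = v).card +
    (Finset.univ.filter fun e => G.tgt e = v).card

/-- The edges crossing the vertex set `A`. -/
def cutEdges (A : Finset G.V) : Finset G.E :=
  Finset.univ.filter fun e =>
    (G.src e ∈ A ∧ G.tgt e ∉ A) ∨ (G.src e ∉ A ∧ G.tgt e ∈ A)

/-- `F` is a cut: the set of edges crossing a nontrivial bipartition of the vertices. -/
def IsCut (F : Finset G.E) : Prop :=
  ∃ A : Finset G.V, A.Nonempty ∧ A ≠ Finset.univ ∧ F = G.cutEdges A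

/-- `F` is a bond: a minimal cut. -/
def IsBond (F : Finset G.E) : Prop :=
  G.IsCut F ∧ ∀ F' ⊆ F, G.IsCut F' → F' = F

/-- Number of `s`-bonds of `G`. -/
def bondCount (s : ℕ) : ℕ :=
  ((Finset.univ : Finset (Finset G.E)).filter fun F => F.card = s ∧ G.IsBond F).card

/-- Adjacency of vertices. -/
def Adj (u v : G.V) : Prop :=
  ∃ e : G.E, (G.src e = u ∧ G.tgt e = v) ∨ (G.src e = v ∧ G.tgt e = u)

/-- `G` is simple: no loops and no parallel edges. -/
def IsSimple : Prop :=
  (∀ e : G.E, G.src e ≠ G.tgt e) ∧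
    ∀ e f : G.E,
      ((G.src e = G.src f ∧ G.tgt e = G.tgt f) ∨ (G.src e = G.tgt f ∧ G.tgt e = G.src f)) →
        e = f

end Multigraph

/-- `G ∈ 𝒢_{n,m}`: connected with `n` vertices and `m` edges. -/
def memG (G : Multigraph) (n m : ℕ) : Prop :=
  G.nV = n ∧ G.nE = m ∧ G.Connected

/-- Isomorphism of multigraphs. -/
structure MGIso (G H : Multigraph) where
  vMap : G.V ≃ H.V
  eMap : G.E ≃ H.E
  ends_eq : ∀ e : G.E,
    (H.src (eMap e) = vMap (G.src e) ∧ H.tgt (eMap e) = vMap (G.tgt e)) ∨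
    (H.src (eMap e) = vMap (G.tgt e) ∧ H.tgt (eMap e) = vMap (G.src e))

def IsIso (G H : Multigraph) : Prop := Nonempty (MGIso G H)

/-- `G` is `p`-optimal in `𝒢_{n,m}`. -/
def pOptimal (G : Multigraph) (n m : ℕ) (p : ℝ) : Prop :=
  memG G n m ∧ ∀ H : Multigraph, memG H n m → H.rel p ≤ G.rel p

/-- `G` is uniquely optimal in `𝒢_{n,m}`: strictly more reliable than every
non-isomorphic member, for every `p ∈ (0,1)`. -/
def UniquelyOptimal (G : Multigraph) (n m : ℕ) : Prop :=
  memG G n m ∧ ∀ H : Multigraph, memG H n m → ¬ IsIso G H →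
    ∀ p : ℝ, 0 < p → p < 1 → H.rel p < G.rel p

noncomputable instance quotFintype {α : Type} [Fintype α] {r : α → α → Prop} :
    Fintype (Quot r) :=
  letI := Classical.decEq (Quot r)
  Fintype.ofSurjective (Quot.mk r) fun q => Quot.exists_rep q

/-- Identification of the endpoints of zero-weight edges. -/
def zeroRel (D : Multigraph) (w : D.E → ℕ) : D.V → D.V → Prop :=
  fun u v => ∃ e : D.E, w e = 0 ∧ D.src e = u ∧ D.tgt e = v

/-- The `j`-th node along the chain replacing the edge `e` (whose chain has `w e` edges). -/
def chainNode (D : Multigraph) (w : D.E → ℕ) (e : D.E) (j : ℕ) :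
    Quot (zeroRel D w) ⊕ (Σ f : D.E, Fin (w f - 1)) :=
  if h : 0 < j ∧ j < w e then Sum.inr ⟨e, ⟨j - 1, by omega⟩⟩
  else if j = 0 then Sum.inl (Quot.mk _ (D.src e))
  else Sum.inl (Quot.mk _ (D.tgt e))

/-- The weak subdivision of `D` determined by the chain lengths `w`: each edge `e` is
replaced by a chain with `w e` edges; zero-weight edges are contracted. -/
def subdivide (D : Multigraph) (w : D.E → ℕ) : Multigraph where
  V := Quot (zeroRel D w) ⊕ (Σ f : D.E, Fin (w f - 1))
  E := Σ f : D.E, Fin (w f)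
  src f := chainNode D w f.1 f.2.val
  tgt f := chainNode D w f.1 (f.2.val + 1)

/-- The zero-weight edges contain no cycle (no "zero cycle"): they form a forest. -/
def ZeroAcyclic (D : Multigraph) (w : D.E → ℕ) : Prop :=
  Fintype.card (Quot (zeroRel D w)) +
      (Finset.univ.filter fun e : D.E => w e = 0).card = Fintype.card D.V

/-- `G` is a weak subdivision of `D` with chain lengths `w`. -/
def IsWeakSubdivision (G D : Multigraph) (w : D.E → ℕ) : Prop :=
  ZeroAcyclic D w ∧ IsIso G (subdivide D w)

/-- `D` is a weak distillation of `G`. -/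
def IsWeakDistillation (D G : Multigraph) : Prop :=
  ∃ w : D.E → ℕ, IsWeakSubdivision G D w

/-- The chain lengths differ pairwise by at most one. -/
def BalancedWeights {E : Type} (w : E → ℕ) : Prop := ∀ e f : E, w e ≤ w f + 1

/-- `D ∈ 𝒟_k`: connected, cubic, 3-edge-connected, of exceedance `k`. -/
def memDk (k : ℕ) (D : Multigraph) : Prop :=
  D.Connected ∧ (∀ v : D.V, D.deg v = 3) ∧
    (∀ F : Finset D.E, D.Disconnects F → 3 ≤ F.card) ∧ D.nE = D.nV + k

/-- Identification of the two endpoints of the edge `e`. -/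
def contractRel (G : Multigraph) (e : G.E) : G.V → G.V → Prop :=
  fun u v => u = G.src e ∧ v = G.tgt e

/-- Contraction of the edge `e`. -/
def Multigraph.contract (G : Multigraph) (e : G.E) : Multigraph :=
  letI := Classical.decEq G.E
  { V := Quot (contractRel G e)
    E := {f : G.E // f ≠ e}
    src := fun f => Quot.mk _ (G.src f.1)
    tgt := fun f => Quot.mk _ (G.tgt f.1) }

/-- `G'` is obtained from `G` by shifting an edge: in an intermediate graph `H`
(the expansion of `G` at a vertex by the new edge `e'`), the edges `e, e'` form a
2-bond; contracting `e'` gives back `G`, while contracting `e` gives `G'`. -/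
def IsShiftOf (G G' : Multigraph) : Prop :=
  ∃ (H : Multigraph) (e e' : H.E), e ≠ e' ∧
    H.src e ≠ H.tgt e ∧ H.src e' ≠ H.tgt e' ∧
    H.IsBond {e, e'} ∧
    IsIso (H.contract e') G ∧ IsIso (H.contract e) G'

/-- Equivalence of graphs: repeated edge shifting. -/
def EquivalentGraphs (G G' : Multigraph) : Prop :=
  Relation.ReflTransGen IsShiftOf G G'

/-- `G'` is obtained from `G` by moving the (non-loop) edge `e`: contracting `e` and
expanding a new edge, identified with `e` via `φ`, at an arbitrary vertex.
Equivalently, `G/e` and `G'/φ e` agree, compatibly with the edge identification `φ`. -/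
def MovedEdge (G G' : Multigraph) (φ : G.E ≃ G'.E) (e : G.E) : Prop :=
  G.src e ≠ G.tgt e ∧ G'.src (φ e) ≠ G'.tgt (φ e) ∧
  ∃ ψ : Quot (contractRel G e) ≃ Quot (contractRel G' (φ e)),
    ∀ f : G.E, f ≠ e →
      ((ψ (Quot.mk _ (G.src f)) = Quot.mk _ (G'.src (φ f)) ∧
        ψ (Quot.mk _ (G.tgt f)) = Quot.mk _ (G'.tgt (φ f))) ∨
       (ψ (Quot.mk _ (G.src f)) = Quot.mk _ (G'.tgt (φ f)) ∧
        ψ (Quot.mk _ (G.tgt f)) = Quot.mk _ (G'.src (φ f))))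

/-- Move one edge from the chain `a` to the chain `b`. -/
def moveWeight {E : Type} (w : E → ℕ) (a b : E) : E → ℕ :=
  fun g => if g = b then w b + 1 else if g = a then w a - 1 else w g

/-- The chains of maximal length. -/
def maxChains (D : Multigraph) (w : D.E → ℕ) : Finset D.E :=
  Finset.univ.filter fun e => ∀ f : D.E, w f ≤ w e

/-- The chains of minimal length. -/
def minChains (D : Multigraph) (w : D.E → ℕ) : Finset D.E :=
  Finset.univ.filter fun e => ∀ f : D.E, w e ≤ w f

/-- Degree of `v` within the edge set `S`. -/
def degIn (D : Multigraph) (S : Finset D.E) (v : D.V) : ℕ :=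
  (S.filter fun e => D.src e = v).card + (S.filter fun e => D.tgt e = v).card

/-- `S` is a matching (pairwise non-adjacent edges). -/
def IsMatchingIn (D : Multigraph) (S : Finset D.E) : Prop := ∀ v : D.V, degIn D S v ≤ 1

/-- `S` is a path with three edges. -/
def IsPath3In (D : Multigraph) (S : Finset D.E) : Prop :=
  S.card = 3 ∧ (∀ v : D.V, degIn D S v ≤ 2) ∧
    (Finset.univ.filter fun v : D.V => degIn D S v = 1).card = 2

/-- `S` is the disjoint union of a path with three edges and a single edge. -/
def IsPath3PlusEdgeIn (D : Multigraph) (S : Finset D.E) : Prop :=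
  S.card = 4 ∧ (∀ v : D.V, degIn D S v ≤ 2) ∧
    (Finset.univ.filter fun v : D.V => degIn D S v = 1).card = 4 ∧
    ∃ e ∈ S, degIn D S (D.src e) = 2 ∧ degIn D S (D.tgt e) = 2

/-- `S` is the disjoint union of two paths with two edges each. -/
def IsTwoPlusTwoIn (D : Multigraph) (S : Finset D.E) : Prop :=
  S.card = 4 ∧ (∀ v : D.V, degIn D S v ≤ 2) ∧
    (Finset.univ.filter fun v : D.V => degIn D S v = 1).card = 4 ∧
    ∀ e ∈ S, degIn D S (D.src e) = 1 ∨ degIn D S (D.tgt e) = 1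

/-- Two edges sharing a vertex. -/
def AdjEdges (D : Multigraph) (a b : D.E) : Prop :=
  ∃ v : D.V, (D.src a = v ∨ D.tgt a = v) ∧ (D.src b = v ∨ D.tgt b = v)

/-- The number of incidences of edges of weight `c` at the vertex `u`. -/
def incCount (D : Multigraph) (w : D.E → ℕ) (u : D.V) (c : ℕ) : ℕ :=
  (Finset.univ.filter fun e : D.E => D.src e = u ∧ w e = c).card +
    (Finset.univ.filter fun e : D.E => D.tgt e = u ∧ w e = c).card

/-- The `π^v`-value of the vertex `u`: the number of incident edges of weight `q + 1`
minus the number of incident edges of weight `q - 1`. -/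
def piV (D : Multigraph) (w : D.E → ℕ) (q : ℕ) (u : D.V) : ℤ :=
  (incCount D w u (q + 1) : ℤ) -
    (if q = 0 then 0 else (incCount D w u (q - 1) : ℤ))

/-- The `π^v`-values are balanced: pairwise differences at most one. -/
def BalancedPiV (D : Multigraph) (w : D.E → ℕ) (q : ℕ) : Prop :=
  ∀ u v : D.V, piV D w q u ≤ piV D w q v + 1

/-- The standard weight `q`, where `m = 3kq + r` with `-3k/2 < r ≤ 3k/2`. -/
def stdWeight (m k : ℕ) : ℕ := (2 * m + 3 * k - 1) / (6 * k)

/-- `w` is a balanced weighting of `D` of total size `m` (the implied weak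
subdivision is the generic member of `ℬ_m(D)`). -/
def IsBalancedWeighting (D : Multigraph) (w : D.E → ℕ) (m : ℕ) : Prop :=
  (∑ e : D.E, w e) = m ∧ BalancedWeights w ∧ ZeroAcyclic D w

/-- Every 3-bond of `D` is trivial (consists of the three edges at a single vertex). -/
def OnlyTrivialThreeBonds (D : Multigraph) : Prop :=
  ∀ F : Finset D.E, D.IsBond F → F.card = 3 →
    ∃ u : D.V, F = Finset.univ.filter fun e => D.src e = u ∨ D.tgt e = u

/-- The 3-dipole: two vertices joined by three parallel edges. -/
def dipole3 : Multigraph where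
  V := Fin 2
  E := Fin 3
  src _ := 0
  tgt _ := 1

/-- The complete graph `K₄`. -/
def K4 : Multigraph where
  V := Fin 4
  E := {p : Fin 4 × Fin 4 // p.1 < p.2}
  src p := p.1.1
  tgt p := p.1.2

/-- The complete bipartite graph `K_{3,3}`. -/
def K33 : Multigraph where
  V := Fin 3 ⊕ Fin 3
  E := Fin 3 × Fin 3
  src p := Sum.inl p.1
  tgt p := Sum.inr p.2

/-- The triangular prism `Π₃`; the edges `Sum.inr i` are the rungs. -/
def prism : Multigraph where
  V := Fin 3 × Bool
  E := (Fin 3 × Bool) ⊕ Fin 3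
  src := fun e => match e with
    | Sum.inl (i, b) => (i, b)
    | Sum.inr i => (i, false)
  tgt := fun e => match e with
    | Sum.inl (i, b) => (i + 1, b)
    | Sum.inr i => (i, true)

/-- The Wagner graph (the 4-Möbius ladder): the edges `Sum.inl i` are the rails
(the 8-cycle) and the edges `Sum.inr j` are the rungs. -/
def wagner : Multigraph where
  V := Fin 8
  E := Fin 8 ⊕ Fin 4
  src := fun e => match e with
    | Sum.inl i => i
    | Sum.inr j => ⟨j.val, by omega⟩
  tgt := fun e => match e with
    | Sum.inl i => i + 1
    | Sum.inr j => ⟨j.val + 4, by omega⟩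

/-- The Petersen graph. -/
def petersen : Multigraph where
  V := Fin 5 × Bool
  E := Fin 5 ⊕ Fin 5 ⊕ Fin 5
  src := fun e => match e with
    | Sum.inl i => (i, false)
    | Sum.inr (Sum.inl i) => (i, false)
    | Sum.inr (Sum.inr i) => (i, true)
  tgt := fun e => match e with
    | Sum.inl i => (i + 1, false)
    | Sum.inr (Sum.inl i) => (i, true)
    | Sum.inr (Sum.inr i) => (i + 2, true)

/-! Deleting edges leaves a subdivision connected exactly when no chain loses two edges and the
chains that lose one form a set whose deletion leaves the base graph connected. So the number of
`i`-sets of edges of the subdivision that are not disconnections is a polynomial in the chain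
lengths, `chainSum`. For `i ≤ 4` it is the elementary symmetric polynomial of degree `i` less the
products over the sets containing a cut, and the cuts with at most four edges of a small cubic graph
are known explicitly.

Crossing two rails at one rung turns the prism into a twisted prism, which is a copy of `K33`. If
some rung chain has length zero, crossing the rails there does not change the subdivision, so a weak
subdivision of the prism is one of `K33`. If all rung chains are positive, the two triangles
become vertex-disjoint cycles; a weak subdivision of `K33` has no such pair, since contracting edges
and subdividing cannot create one and `K33` has none.

In that case keep the rung lengths and the total length of each rail pair, cross the rails, and
split each total as evenly as possible. Let `rᵢ` be the rung lengths, `Sᵢ` the rail sums, `δᵢ` the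
rail differences and `εᵢ` the residue of `Sᵢ` modulo 2. Four times the increase of `chainSum` is a
combination, with nonnegative coefficients, of terms `δᵢ² - εᵢ²`, `(δᵢ + δⱼ)² - (εᵢ - εⱼ)²` and
`(δ₀ + δ₁ + δ₂)² - (εᵢ₊₁ + εᵢ₊₂ - εᵢ)²`, plus `4 r₀ r₁ r₂` in degree three and
`4 r₀ r₁ r₂ (S₀ + S₁ + S₂)` in degree four; the extra summand is due to the prism alone having the
three rungs as a cut. In each term the two squares have bases of equal parity, which makes it
nonnegative except when the subtracted base is `2`; the extra summand outweighs that exception.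
The reliability comparison follows because the counts agree or increase in every degree. -/

namespace Multigraph

variable (G : Multigraph)

section Connectivity

theorem connOn_iff {S : Finset G.E} :
    G.ConnOn S ↔ ∀ c : G.V → Prop, (∀ e ∈ S, (c (G.src e) ↔ c (G.tgt e))) →
      ∀ u v, c u → c v := by
  refine ⟨fun h c hc u v hu => ?_, fun h u v => ?_⟩
  · induction h u v with
    | refl => exact hu
    | tail _ hstep ih =>
      obtain ⟨e, he, ⟨rfl, rfl⟩ | ⟨rfl, rfl⟩⟩ := hstep
      exacts [(hc e he).1 ih, (hc e he).2 ih]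
  · refine h (Relation.ReflTransGen (G.stepOn S) u) (fun e he => ⟨fun hr => ?_, fun hr => ?_⟩)
      u v .refl
    exacts [hr.tail ⟨e, he, .inl ⟨rfl, rfl⟩⟩, hr.tail ⟨e, he, .inr ⟨rfl, rfl⟩⟩]

theorem mem_cutEdges {A : Finset G.V} {e : G.E} :
    e ∈ G.cutEdges A ↔ ¬(G.src e ∈ A ↔ G.tgt e ∈ A) := by
  simp only [cutEdges, mem_filter, mem_univ, true_and]
  tauto

theorem disconnects_iff_exists_cutEdges_subset {F : Finset G.E} :
    G.Disconnects F ↔ ∃ A : Finset G.V, A.Nonempty ∧ A ≠ univ ∧ G.cutEdges A ⊆ F := by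
  rw [Disconnects, connOn_iff]
  push Not
  constructor
  · rintro ⟨c, hc, u, v, hu, hv⟩
    refine ⟨univ.filter c, ⟨u, by simpa⟩, fun h => hv ?_, fun e he => ?_⟩
    · exact (mem_filter.1 (h.symm ▸ mem_univ v)).2
    · by_contra heF
      simp only [mem_cutEdges, mem_filter, mem_univ, true_and] at he
      exact he (hc e (by simpa using heF))
  · rintro ⟨A, ⟨u, hu⟩, hA, hF⟩
    obtain ⟨v, hv⟩ : ∃ v, v ∉ A := by simpa [eq_univ_iff_forall] using hA
    refine ⟨(· ∈ A), fun e he => ?_, u, v, hu, hv⟩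
    by_contra hcut
    exact (mem_sdiff.1 he).2 (hF (G.mem_cutEdges.2 hcut))

end Connectivity

section Reliability

/-- The sets of `i` edges of `G` whose deletion leaves `G` connected. -/
def nonDisconnections (i : ℕ) : Finset (Finset G.E) :=
  (powersetCard i univ).filter fun F => G.ConnOn (univ \ F)

variable {G} in
theorem mem_nonDisconnections {i : ℕ} {F : Finset G.E} :
    F ∈ G.nonDisconnections i ↔ #F = i ∧ G.ConnOn (univ \ F) := by
  simp [nonDisconnections]

theorem d_add_card_nonDisconnections (i : ℕ) :
    G.d i + #(G.nonDisconnections i) = G.nE.choose i := by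
  have hd : G.d i = #((powersetCard i univ).filter fun F => ¬ G.ConnOn (univ \ F)) := by
    rw [d]
    congr 1
    ext F
    simp only [mem_filter, mem_univ, mem_powersetCard, subset_univ, true_and]
    rfl
  rw [hd, nonDisconnections, add_comm, card_filter_add_card_filter_not, card_powersetCard,
    card_univ, nE]

theorem rel_eq_sum_card_nonDisconnections (p : ℝ) :
    G.rel p = ∑ i ∈ range (G.nE + 1),
      #(G.nonDisconnections i) * (p ^ (G.nE - i) * (1 - p) ^ i) := by
  let term (F : Finset G.E) : ℝ :=
    if G.ConnOn (univ \ F) then p ^ (G.nE - #F) * (1 - p) ^ #F else 0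
  have hrel : G.rel p = ∑ F ∈ univ.powerset, term F := by
    rw [rel, powerset_univ]
    refine Fintype.sum_equiv (compl_involutive.toPerm compl) _ _ fun S => ?_
    have hS : #S ≤ G.nE := card_le_univ S
    have hSc : #Sᶜ = G.nE - #S := card_compl S
    simp only [term, Function.Involutive.coe_toPerm, ← compl_eq_univ_sdiff, compl_compl, hSc,
      Nat.sub_sub_self hS]
  rw [hrel, sum_powerset, card_univ]
  refine sum_congr rfl fun i _ => ?_
  rw [nonDisconnections, ← nsmul_eq_mul, ← sum_const, sum_filter]
  refine sum_congr rfl fun F hF => ?_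
  simp only [term, (mem_powersetCard.1 hF).2]

variable {G} in
theorem rel_lt_rel_of_d_le {H : Multigraph} (hE : H.nE = G.nE) (hle : ∀ i, H.d i ≤ G.d i)
    {j : ℕ} (hj : H.d j < G.d j) {p : ℝ} (hp₀ : 0 < p) (hp₁ : p < 1) : G.rel p < H.rel p := by
  have hcount (i : ℕ) :
      H.d i + #(H.nonDisconnections i) = G.d i + #(G.nonDisconnections i) := by
    rw [d_add_card_nonDisconnections, d_add_card_nonDisconnections, hE]
  have hweight (i : ℕ) : 0 < p ^ (G.nE - i) * (1 - p) ^ i :=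
    mul_pos (pow_pos hp₀ _) (pow_pos (sub_pos.2 hp₁) _)
  have hjE : j ≤ G.nE := by
    by_contra! hlt
    have := G.d_add_card_nonDisconnections j
    rw [Nat.choose_eq_zero_of_lt hlt] at this
    omega
  rw [rel_eq_sum_card_nonDisconnections, rel_eq_sum_card_nonDisconnections, hE]
  refine sum_lt_sum (fun i _ => mul_le_mul_of_nonneg_right ?_ (hweight i).le)
    ⟨j, by simpa [Nat.lt_succ_iff] using hjE, mul_lt_mul_of_pos_right ?_ (hweight j)⟩
  · exact_mod_cast (by have := hcount i; have := hle i; omega)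
  · exact_mod_cast (by have := hcount j; omega)

end Reliability

end Multigraph

namespace MGIso

variable {G H K : Multigraph}

/-- The inverse of an isomorphism of multigraphs. -/
protected def symm (φ : MGIso G H) : MGIso H G where
  vMap := φ.vMap.symm
  eMap := φ.eMap.symm
  ends_eq e := by
    obtain ⟨e, rfl⟩ := φ.eMap.surjective e
    rcases φ.ends_eq e with ⟨hs, ht⟩ | ⟨hs, ht⟩ <;> simp [hs, ht]

/-- The composite of two isomorphisms of multigraphs. -/
protected def trans (φ : MGIso G H) (ψ : MGIso H K) : MGIso G K where
  vMap := φ.vMap.trans ψ.vMap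
  eMap := φ.eMap.trans ψ.eMap
  ends_eq e := by
    rcases φ.ends_eq e with ⟨hs, ht⟩ | ⟨hs, ht⟩ <;>
      rcases ψ.ends_eq (φ.eMap e) with ⟨hs', ht'⟩ | ⟨hs', ht'⟩ <;> simp [hs, ht, hs', ht']

theorem nE_eq (φ : MGIso G H) : G.nE = H.nE := Fintype.card_congr φ.eMap

theorem nV_eq (φ : MGIso G H) : G.nV = H.nV := Fintype.card_congr φ.vMap

theorem connOn_map (φ : MGIso G H) {S : Finset G.E} (hS : G.ConnOn S) :
    H.ConnOn (S.map φ.eMap.toEmbedding) := by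
  rw [Multigraph.connOn_iff] at hS ⊢
  intro c hc u v hu
  have := hS (c ∘ φ.vMap) (fun e he => ?_) (φ.vMap.symm u) (φ.vMap.symm v) (by simpa)
  · simpa using this
  · have he' := hc (φ.eMap e) (mem_map_of_mem _ he)
    rcases φ.ends_eq e with ⟨hs, ht⟩ | ⟨hs, ht⟩ <;>
      simpa only [hs, ht, Function.comp_apply, iff_comm] using he'

theorem card_nonDisconnections_le (φ : MGIso G H) (i : ℕ) :
    #(G.nonDisconnections i) ≤ #(H.nonDisconnections i) := by
  refine card_le_card_of_injOn (Finset.map φ.eMap.toEmbedding) (fun F hF => ?_)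
    (Finset.map_injective _).injOn
  rw [mem_coe, Multigraph.mem_nonDisconnections] at hF ⊢
  refine ⟨by rw [card_map, hF.1], ?_⟩
  have := φ.connOn_map hF.2
  rwa [Finset.map_sdiff, map_univ_equiv] at this

theorem card_nonDisconnections_eq (φ : MGIso G H) (i : ℕ) :
    #(G.nonDisconnections i) = #(H.nonDisconnections i) :=
  (φ.card_nonDisconnections_le i).antisymm (φ.symm.card_nonDisconnections_le i)

end MGIso

section Subdivision

variable (D : Multigraph) (w : D.E → ℕ)

/-- The edge of `D` whose chain contains the given edge of the subdivision. -/
def chainOf (x : (subdivide D w).E) : D.E := Sigma.fst x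

/-- The node of the subdivision at the vertex `v` of `D`. -/
def cornerNode (v : D.V) : (subdivide D w).V := Sum.inl (Quot.mk _ v)

/-- The `j`-th node along the chain of `e`, as a vertex of the subdivision. -/
def nodeAt (e : D.E) (j : ℕ) : (subdivide D w).V := chainNode D w e j

/-- The `j`-th edge along the chain of `e`. -/
def edgeAt (e : D.E) (j : Fin (w e)) : (subdivide D w).E := ⟨e, j⟩

variable {D w}

@[simp] theorem src_edgeAt (e : D.E) (j : Fin (w e)) :
    (subdivide D w).src (edgeAt D w e j) = nodeAt D w e j := rfl

@[simp] theorem tgt_edgeAt (e : D.E) (j : Fin (w e)) :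
    (subdivide D w).tgt (edgeAt D w e j) = nodeAt D w e (j + 1) := rfl

theorem edgeAt_injective (e : D.E) : Function.Injective (edgeAt D w e) :=
  fun _ _ h => eq_of_heq (Sigma.mk.inj h).2

theorem exists_edgeAt_eq (x : (subdivide D w).E) : ∃ e j, edgeAt D w e j = x :=
  ⟨x.1, x.2, rfl⟩

theorem cornerNode_src_eq_tgt {e : D.E} (he : w e = 0) :
    cornerNode D w (D.src e) = cornerNode D w (D.tgt e) :=
  congrArg Sum.inl (Quot.sound ⟨e, he, rfl, rfl⟩)

theorem nodeAt_zero (e : D.E) : nodeAt D w e 0 = cornerNode D w (D.src e) := by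
  rw [nodeAt, chainNode, dif_neg (by omega), if_pos rfl, cornerNode]

theorem nodeAt_last (e : D.E) : nodeAt D w e (w e) = cornerNode D w (D.tgt e) := by
  by_cases he : w e = 0
  · rw [he, nodeAt_zero, cornerNode_src_eq_tgt he]
  · exact (dif_neg (by omega)).trans (if_neg he)

theorem nodeAt_inner (e : D.E) {j : ℕ} (hj₀ : 0 < j) (hj : j < w e) :
    nodeAt D w e j = Sum.inr ⟨e, ⟨j - 1, by omega⟩⟩ :=
  dif_pos ⟨hj₀, hj⟩

theorem node_cases (u : (subdivide D w).V) :
    (∃ v, u = cornerNode D w v) ∨ ∃ e j, 0 < j ∧ j < w e ∧ u = nodeAt D w e j := by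
  rcases u with ⟨⟨v⟩⟩ | ⟨e, j, hj⟩
  · exact .inl ⟨v, rfl⟩
  · exact .inr ⟨e, j + 1, by omega, by omega, (nodeAt_inner (w := w) e j.succ_pos (by omega)).symm⟩

variable (D w) in
/-- The colouring of the nodes of the subdivision that is `c` on the corners and `x e j` on the
`j`-th node of the chain of `e`. -/
def extendColouring (c : Quot (zeroRel D w) → Prop) (x : D.E → ℕ → Prop) :
    (subdivide D w).V → Prop
  | .inl q => c q
  | .inr ⟨e, j⟩ => x e (j + 1)

theorem extendColouring_nodeAt {c : Quot (zeroRel D w) → Prop} {x : D.E → ℕ → Prop} {e : D.E}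
    (hsrc : x e 0 ↔ c (Quot.mk _ (D.src e))) (htgt : x e (w e) ↔ c (Quot.mk _ (D.tgt e)))
    {j : ℕ} (hj : j ≤ w e) : extendColouring D w c x (nodeAt D w e j) ↔ x e j := by
  rcases Nat.eq_zero_or_pos j with rfl | hj₀
  · rw [nodeAt_zero]; exact hsrc.symm
  rcases hj.lt_or_eq with hj | rfl
  · rw [nodeAt_inner e hj₀ hj]
    change x e (j - 1 + 1) ↔ _
    rw [Nat.sub_add_cancel hj₀]
  · rw [nodeAt_last]; exact htgt.symm

theorem colour_nodeAt_iff {c : (subdivide D w).V → Prop} {e : D.E} {a b : ℕ} (hab : a ≤ b)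
    (hc : ∀ i, a ≤ i → i < b → (c (nodeAt D w e i) ↔ c (nodeAt D w e (i + 1)))) :
    c (nodeAt D w e a) ↔ c (nodeAt D w e b) := by
  induction b, hab using Nat.le_induction with
  | base => rfl
  | succ n hn ih =>
    exact (ih fun i hi hin => hc i hi (hin.trans n.lt_succ_self)).trans (hc n hn n.lt_succ_self)

variable {F : Finset (subdivide D w).E}

theorem connOn_subdivide_compl_iff :
    (subdivide D w).ConnOn (univ \ F) ↔ ∀ c : (subdivide D w).V → Prop,
      (∀ e (j : Fin (w e)), edgeAt D w e j ∉ F →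
        (c (nodeAt D w e j) ↔ c (nodeAt D w e (j + 1)))) → ∀ u v, c u → c v := by
  rw [Multigraph.connOn_iff]
  refine forall_congr' fun c => imp_congr_left
    ⟨fun h e j hj => h (edgeAt D w e j) (by simpa), fun h x hx => ?_⟩
  obtain ⟨e, j, rfl⟩ := exists_edgeAt_eq x
  exact h e j (by simpa using hx)

theorem injOn_chainOf_of_connOn (hF : (subdivide D w).ConnOn (univ \ F)) :
    Set.InjOn (chainOf D w) F := by
  have not_before (e : D.E) (i j : Fin (w e)) (hi : edgeAt D w e i ∈ F) (hj : edgeAt D w e j ∈ F) :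
      ¬ i < j := by
    intro hij
    let x (f : D.E) (k : ℕ) : Prop := f = e ∧ i.val < k ∧ k ≤ j
    have hx {f : D.E} {k : ℕ} (hk : k ≤ w f) :
        extendColouring D w (fun _ => False) x (nodeAt D w f k) ↔ x f k :=
      extendColouring_nodeAt (by simp [x]) (by simp only [x, iff_false]; rintro ⟨rfl, h⟩; omega) hk
    have hconst := connOn_subdivide_compl_iff.1 hF (extendColouring D w (fun _ => False) x)
      (fun f k hk => ?_) (nodeAt D w e (i + 1)) (nodeAt D w e 0)
      ((hx i.2).2 ⟨rfl, Nat.lt_succ_self _, hij⟩)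
    · exact absurd ((hx (Nat.zero_le _)).1 hconst).2.1 (Nat.not_lt_zero _)
    · rw [hx k.2.le, hx k.2]
      refine and_congr_right fun hfe => ?_
      subst hfe
      have hki : k.val ≠ i := fun h => hk (Fin.ext h ▸ hi)
      have hkj : k.val ≠ j := fun h => hk (Fin.ext h ▸ hj)
      omega
  intro x hx y hy hxy
  obtain ⟨e, i, rfl⟩ := exists_edgeAt_eq x
  obtain ⟨f, j, rfl⟩ := exists_edgeAt_eq y
  obtain rfl : e = f := hxy
  exact congrArg _ (le_antisymm (not_lt.1 (not_before e j i hy hx))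
    (not_lt.1 (not_before e i j hx hy)))

theorem connOn_image_chainOf (hF : (subdivide D w).ConnOn (univ \ F)) :
    D.ConnOn (univ \ F.image (chainOf D w)) := by
  rw [Multigraph.connOn_iff]
  intro c hc u v hu
  have hc' {e : D.E} (he : ∀ j, edgeAt D w e j ∉ F) : c (D.src e) ↔ c (D.tgt e) := by
    refine hc e (mem_sdiff.2 ⟨mem_univ e, fun h => ?_⟩)
    obtain ⟨x, hx, rfl⟩ := mem_image.1 h
    obtain ⟨e, j, rfl⟩ := exists_edgeAt_eq x
    exact he j hx
  let q : Quot (zeroRel D w) → Prop := Quot.lift c (by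
    rintro _ _ ⟨e, he, rfl, rfl⟩
    exact propext (hc' fun j => absurd j.2 (by omega)))
  let x (e : D.E) (k : ℕ) : Prop :=
    if ∃ j : Fin (w e), edgeAt D w e j ∈ F ∧ j.val < k then c (D.tgt e) else c (D.src e)
  have hx {e : D.E} {k : ℕ} (hk : k ≤ w e) :
      extendColouring D w q x (nodeAt D w e k) ↔ x e k := by
    refine extendColouring_nodeAt (by simp [x, q]) ?_ hk
    by_cases h : ∃ j, edgeAt D w e j ∈ F
    · have h' : ∃ j : Fin (w e), edgeAt D w e j ∈ F ∧ j.val < w e := h.imp fun j hj => ⟨hj, j.2⟩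
      simp only [x, if_pos h', q]
    · have h' : ¬∃ j : Fin (w e), edgeAt D w e j ∈ F ∧ j.val < w e := fun ⟨j, hj, _⟩ => h ⟨j, hj⟩
      simp only [x, if_neg h', q]
      exact hc' (not_exists.1 h)
  refine connOn_subdivide_compl_iff.1 hF (extendColouring D w q x) (fun e k hk => ?_)
    (cornerNode D w u) (cornerNode D w v) hu
  rw [hx k.2.le, hx k.2]
  have : (∃ j : Fin (w e), edgeAt D w e j ∈ F ∧ j.val < k) ↔
      ∃ j : Fin (w e), edgeAt D w e j ∈ F ∧ j.val < k + 1 := by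
    refine exists_congr fun j => and_congr_right fun hj => ?_
    have hjk : j.val ≠ k := fun h => hk (Fin.ext h ▸ hj)
    omega
  simp only [x, this]

theorem connOn_of_connOn_image_chainOf (hinj : Set.InjOn (chainOf D w) F)
    (hF : D.ConnOn (univ \ F.image (chainOf D w))) : (subdivide D w).ConnOn (univ \ F) := by
  rw [connOn_subdivide_compl_iff]
  intro c hc
  have hsrc {e : D.E} {k : ℕ} (hk : k ≤ w e) (h : ∀ j : Fin (w e), edgeAt D w e j ∈ F → k ≤ j) :
      c (cornerNode D w (D.src e)) ↔ c (nodeAt D w e k) := by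
    rw [← nodeAt_zero]
    refine colour_nodeAt_iff k.zero_le fun i _ hik => hc e ⟨i, hik.trans_le hk⟩ fun hi => ?_
    exact (h _ hi).not_gt hik
  have htgt {e : D.E} {k : ℕ} (hk : k ≤ w e) (h : ∀ j : Fin (w e), edgeAt D w e j ∈ F → j.val < k) :
      c (nodeAt D w e k) ↔ c (cornerNode D w (D.tgt e)) := by
    rw [← nodeAt_last]
    exact colour_nodeAt_iff hk fun i hki hi => hc e ⟨i, hi⟩ fun hiF => (h _ hiF).not_ge hki
  have hcorner : ∀ u v, c (cornerNode D w u) → c (cornerNode D w v) :=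
    D.connOn_iff.1 hF (c ∘ cornerNode D w) fun e he => by
      have he' (j : Fin (w e)) : edgeAt D w e j ∉ F := fun hj =>
        (mem_sdiff.1 he).2 (mem_image.2 ⟨_, hj, rfl⟩)
      simpa only [Function.comp_apply, nodeAt_last] using
        hsrc (le_refl (w e)) fun j hj => absurd hj (he' j)
  have hnode (u : (subdivide D w).V) : ∃ v, c u ↔ c (cornerNode D w v) := by
    obtain ⟨v, rfl⟩ | ⟨e, k, -, hk, rfl⟩ := node_cases u
    · exact ⟨v, Iff.rfl⟩
    by_cases h : ∃ i : Fin (w e), edgeAt D w e i ∈ F ∧ i.val < k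
    · obtain ⟨i, hi, hik⟩ := h
      refine ⟨_, htgt hk.le fun j hj => ?_⟩
      rwa [edgeAt_injective e (hinj hj hi rfl)]
    · exact ⟨_, (hsrc hk.le fun j hj => not_lt.1 fun hjk => h ⟨j, hj, hjk⟩).symm⟩
  intro u v hu
  obtain ⟨u', hu'⟩ := hnode u
  obtain ⟨v', hv'⟩ := hnode v
  exact hv'.2 (hcorner u' v' (hu'.1 hu))

theorem connOn_subdivide_compl_iff_injOn :
    (subdivide D w).ConnOn (univ \ F) ↔
      Set.InjOn (chainOf D w) F ∧ D.ConnOn (univ \ F.image (chainOf D w)) :=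
  ⟨fun h => ⟨injOn_chainOf_of_connOn h, connOn_image_chainOf h⟩,
    fun h => connOn_of_connOn_image_chainOf h.1 h.2⟩

end Subdivision

section ChainSum

theorem card_eq_prod_of_mem_iff_injOn_image {ι : Type*} {α : ι → Type*} [∀ i, Fintype (α i)]
    {T : Finset ι} {𝒯 : Finset (Finset (Σ i, α i))}
    (h𝒯 : ∀ F, F ∈ 𝒯 ↔ Set.InjOn Sigma.fst (F : Set (Σ i, α i)) ∧ F.image Sigma.fst = T) :
    #𝒯 = ∏ i ∈ T, Fintype.card (α i) := by
  simp only [← card_univ, ← card_pi]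
  symm
  refine card_bij (fun s _ => T.attach.image fun i : T => ⟨i, s i i.2⟩) (fun s _ => ?_)
    (fun s _ t _ hst => ?_) fun F hF => ?_
  · refine (h𝒯 _).2 ⟨?_, ?_⟩
    · rintro ⟨i, a⟩ ha ⟨j, b⟩ hb (rfl : i = j)
      obtain ⟨_, rfl⟩ : ∃ h, s i h = a := by simpa using ha
      obtain ⟨_, rfl⟩ : ∃ h, s i h = b := by simpa using hb
      rfl
    · ext i
      simp
  · funext i hi
    have hmem : (⟨i, s i hi⟩ : Σ i, α i) ∈ T.attach.image fun i : T => ⟨i, t i i.2⟩ :=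
      hst ▸ mem_image.2 ⟨⟨i, hi⟩, mem_attach _ _, rfl⟩
    obtain ⟨⟨j, hj⟩, -, hij⟩ := mem_image.1 hmem
    obtain ⟨rfl, h⟩ := Sigma.mk.inj hij
    exact (eq_of_heq h).symm
  · obtain ⟨hinj, rfl⟩ := (h𝒯 F).1 hF
    have hex (i : ι) (hi : i ∈ F.image Sigma.fst) : ∃ a, (⟨i, a⟩ : Σ i, α i) ∈ F := by
      simpa using hi
    choose s hs using hex
    refine ⟨s, mem_pi.2 fun i hi => mem_univ _, ext fun ⟨i, a⟩ => ?_⟩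
    refine ⟨fun h => ?_, fun h => mem_image.2 ⟨⟨i, mem_image_of_mem _ h⟩, mem_attach _ _, ?_⟩⟩
    · obtain ⟨j, -, hj⟩ := mem_image.1 h
      exact hj ▸ hs j j.2
    · exact hinj (hs _ _) h rfl

variable (D : Multigraph) (w : D.E → ℕ)

/-- The weighted number of sets of `i` edges of `D` whose deletion leaves `D` connected, each set
counted with the product of its weights. -/
def chainSum (i : ℕ) : ℕ := ∑ T ∈ D.nonDisconnections i, ∏ e ∈ T, w e

theorem card_nonDisconnections_subdivide (i : ℕ) :
    #((subdivide D w).nonDisconnections i) = chainSum D w i := by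
  have hmem {F : Finset (subdivide D w).E} : F ∈ (subdivide D w).nonDisconnections i ↔
      Set.InjOn (chainOf D w) F ∧ F.image (chainOf D w) ∈ D.nonDisconnections i := by
    rw [Multigraph.mem_nonDisconnections, Multigraph.mem_nonDisconnections,
      connOn_subdivide_compl_iff_injOn, and_left_comm]
    exact and_congr_right fun h => by rw [card_image_of_injOn h]
  rw [card_eq_sum_card_fiberwise fun F hF => (hmem.1 hF).2, chainSum]
  refine sum_congr rfl fun T hT => ?_
  have hfibre (F : Finset (subdivide D w).E) :
      F ∈ ((subdivide D w).nonDisconnections i).filter (image (chainOf D w) · = T) ↔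
        Set.InjOn (chainOf D w) F ∧ F.image (chainOf D w) = T := by
    rw [mem_filter, hmem]
    exact ⟨fun ⟨⟨hinj, _⟩, himage⟩ => ⟨hinj, himage⟩, fun ⟨hinj, himage⟩ =>
      ⟨⟨hinj, himage.symm ▸ hT⟩, himage⟩⟩
  have hprod := card_eq_prod_of_mem_iff_injOn_image (α := fun e => Fin (w e)) (fun F => hfibre F)
  simp only [Fintype.card_fin] at hprod
  exact Eq.trans (by congr!) hprod

theorem nE_subdivide : (subdivide D w).nE = ∑ e, w e := by
  rw [Multigraph.nE]
  exact (Fintype.card_sigma).trans (by simp)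

end ChainSum

section Components

namespace Multigraph

variable (G : Multigraph)

/-- Adjacency along the edges of `Z`; the components of the spanning subgraph `Z` are the classes
of the relation it generates. -/
def edgeRel (Z : Finset G.E) (u v : G.V) : Prop := ∃ e ∈ Z, G.src e = u ∧ G.tgt e = v

/-- The number of components of the spanning subgraph with edge set `Z`. -/
def numComponents (Z : Finset G.E) : ℕ := Fintype.card (Quot (G.edgeRel Z))

variable {G}

theorem numComponents_le_insert (Z : Finset G.E) (e : G.E) :
    G.numComponents Z ≤ G.numComponents (insert e Z) + 1 := by
  let toClass : G.V → Quot (G.edgeRel Z) := Quot.mk _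
  let split : Quot (G.edgeRel (insert e Z)) → Quot (G.edgeRel Z) :=
    Quot.lift (fun v => if toClass v = toClass (G.src e) then toClass (G.tgt e) else toClass v) (by
      rintro _ _ ⟨f, hf, rfl, rfl⟩
      rcases mem_insert.1 hf with rfl | hf
      · simp
      · have : toClass (G.src f) = toClass (G.tgt f) := Quot.sound ⟨f, hf, rfl, rfl⟩
        simp only [this])
  rw [numComponents, numComponents, ← Fintype.card_option]
  refine Fintype.card_le_of_surjective (fun q => q.elim (toClass (G.src e)) split) fun q => ?_
  obtain ⟨v, rfl⟩ := Quot.exists_rep q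
  by_cases hv : toClass v = toClass (G.src e)
  exacts [⟨none, hv.symm⟩, ⟨some (Quot.mk _ v), if_neg hv⟩]

theorem numComponents_le_union (Z Y : Finset G.E) :
    G.numComponents Z ≤ G.numComponents (Z ∪ Y) + #Y := by
  induction Y using Finset.induction_on with
  | empty => simp
  | insert e Y he ih =>
    rw [card_insert_of_notMem he, union_insert]
    have := numComponents_le_insert (Z ∪ Y) e
    omega

theorem nV_le_numComponents_add_card (Z : Finset G.E) : G.nV ≤ G.numComponents Z + #Z := by
  have hempty : G.nV ≤ G.numComponents ∅ := by
    refine Fintype.card_le_of_injective (Quot.mk _) fun u v huv => ?_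
    exact congrArg (Quot.lift id (by rintro _ _ ⟨e, he, -⟩; simp at he)) huv
  have := numComponents_le_union ∅ Z
  rw [empty_union] at this
  omega

theorem ConnOn.numComponents_le_one {S : Finset G.E} (hS : G.ConnOn S) :
    G.numComponents S ≤ 1 := by
  rw [numComponents, Fintype.card_le_one_iff]
  rintro ⟨u⟩ ⟨v⟩
  refine (G.connOn_iff.1 hS (Quot.mk (G.edgeRel S) · = Quot.mk _ u) (fun e he => ?_) u v rfl).symm
  rw [Quot.sound ⟨e, he, rfl, rfl⟩]

theorem ConnOn.nV_add_card_le {T : Finset G.E} (hT : G.ConnOn (univ \ T)) :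
    G.nV + #T ≤ G.nE + 1 := by
  have := nV_le_numComponents_add_card (univ \ T)
  have := hT.numComponents_le_one
  have := card_sdiff_add_card_eq_card (subset_univ T)
  rw [card_univ, ← nE] at this
  omega

theorem nonDisconnections_eq_empty {i : ℕ} (hi : G.nE + 1 < G.nV + i) :
    G.nonDisconnections i = ∅ := by
  refine eq_empty_of_forall_notMem fun T hT => ?_
  obtain ⟨rfl, hconn⟩ := mem_nonDisconnections.1 hT
  exact hi.not_ge hconn.nV_add_card_le

end Multigraph

variable {D : Multigraph} {w : D.E → ℕ}

theorem card_quot_zeroRel (D : Multigraph) (w : D.E → ℕ) :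
    Fintype.card (Quot (zeroRel D w)) = D.numComponents {e | w e = 0} := by
  have : zeroRel D w = D.edgeRel {e | w e = 0} := by
    ext u v
    simp [zeroRel, Multigraph.edgeRel]
  rw [this, Multigraph.numComponents]

theorem zeroAcyclic_of_connOn {T : Finset D.E} (hT : D.ConnOn (univ \ T))
    (hcard : D.nV + #T = D.nE + 1) (hw : ∀ e ∈ T, w e ≠ 0) : ZeroAcyclic D w := by
  let Z : Finset D.E := {e | w e = 0}
  have hZT : Z ⊆ univ \ T := fun e he =>
    mem_sdiff.2 ⟨mem_univ e, fun heT => hw e heT (mem_filter.1 he).2⟩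
  have hforest := Multigraph.nV_le_numComponents_add_card Z
  have htree := Multigraph.numComponents_le_union Z ((univ \ T) \ Z)
  rw [union_sdiff_of_subset hZT] at htree
  have hT₁ := hT.numComponents_le_one
  have hcardT := card_sdiff_add_card_eq_card (subset_univ T)
  have hcardZ := card_sdiff_add_card_eq_card hZT
  rw [card_univ, ← Multigraph.nE] at hcardT
  rw [ZeroAcyclic, card_quot_zeroRel, ← Multigraph.nV]
  change D.numComponents Z + #Z = D.nV
  omega

theorem zeroAcyclic_of_chainSum_pos {i : ℕ} (hi : D.nV + i = D.nE + 1)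
    (hpos : 0 < chainSum D w i) : ZeroAcyclic D w := by
  obtain ⟨T, hT, hprod⟩ := exists_ne_zero_of_sum_ne_zero hpos.ne'
  obtain ⟨rfl, hconn⟩ := Multigraph.mem_nonDisconnections.1 hT
  exact zeroAcyclic_of_connOn hconn hi (prod_ne_zero_iff.1 hprod)

theorem chainSum_eq_zero {i : ℕ} (hi : D.nE + 1 < D.nV + i) : chainSum D w i = 0 := by
  rw [chainSum, Multigraph.nonDisconnections_eq_empty hi, sum_empty]

theorem nV_subdivide (hw : ZeroAcyclic D w) : (subdivide D w).nV + D.nE = D.nV + ∑ e, w e := by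
  have hnV : (subdivide D w).nV = Fintype.card (Quot (zeroRel D w)) + ∑ e, (w e - 1) := by
    rw [Multigraph.nV]
    exact Fintype.card_sum.trans (by simp)
  have hinner : ∑ e, (w e - 1) + D.nE = ∑ e, w e + #{e | w e = 0} := by
    rw [card_filter, ← sum_add_distrib, Multigraph.nE, Fintype.card_eq_sum_ones,
      ← sum_add_distrib]
    refine sum_congr rfl fun e _ => ?_
    split_ifs <;> omega
  rw [ZeroAcyclic, ← Multigraph.nV] at hw
  omega

end Components

section Contraction

/-- An isomorphism between the contractions of the zero-weight edges of two weighted multigraphs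
that preserves the weights; the zero-weight edges are kept as loops. -/
structure ContractionIso (D D' : Multigraph) (w : D.E → ℕ) (w' : D'.E → ℕ) where
  vMap : Quot (zeroRel D w) ≃ Quot (zeroRel D' w')
  eMap : D.E ≃ D'.E
  weight_eq : ∀ e, w' (eMap e) = w e
  ends_eq : ∀ e,
    (Quot.mk _ (D'.src (eMap e)) = vMap (Quot.mk _ (D.src e)) ∧
      Quot.mk _ (D'.tgt (eMap e)) = vMap (Quot.mk _ (D.tgt e))) ∨
    (Quot.mk _ (D'.src (eMap e)) = vMap (Quot.mk _ (D.tgt e)) ∧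
      Quot.mk _ (D'.tgt (eMap e)) = vMap (Quot.mk _ (D.src e)))

variable {D D' : Multigraph} {w : D.E → ℕ} {w' : D'.E → ℕ}

theorem mk_src_eq_mk_tgt {e : D.E} (he : w e = 0) :
    Quot.mk (zeroRel D w) (D.src e) = Quot.mk (zeroRel D w) (D.tgt e) :=
  Quot.sound ⟨e, he, rfl, rfl⟩

/-- The identification of the positions along two chains of equal length, reversing the order if
`flip` holds. -/
def positionEquiv (flip : Prop) {a b : ℕ} (h : a = b) : Fin a ≃ Fin b :=
  (if flip then Fin.revPerm else Equiv.refl _).trans (finCongr h)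

theorem val_positionEquiv (flip : Prop) {a b : ℕ} (h : a = b) (j : Fin a) :
    (positionEquiv flip h j : ℕ) = if flip then a - (j + 1) else j := by
  by_cases hflip : flip <;> simp [positionEquiv, hflip, Fin.val_rev]

namespace ContractionIso

/-- Bijections between the vertices and between the edges that respect the ends once the
zero-weight edges are contracted induce an isomorphism of the contractions. -/
def ofEquiv (f : D.V ≃ D'.V) (g : D.E ≃ D'.E) (hw : ∀ e, w' (g e) = w e)
    (hends : ∀ e,
      (Quot.mk (zeroRel D' w') (D'.src (g e)) = Quot.mk _ (f (D.src e)) ∧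
        Quot.mk (zeroRel D' w') (D'.tgt (g e)) = Quot.mk _ (f (D.tgt e))) ∨
      (Quot.mk (zeroRel D' w') (D'.src (g e)) = Quot.mk _ (f (D.tgt e)) ∧
        Quot.mk (zeroRel D' w') (D'.tgt (g e)) = Quot.mk _ (f (D.src e))))
    (hzero : ∀ e, w e = 0 → Quot.mk (zeroRel D w) (f.symm (D'.src (g e))) =
      Quot.mk _ (f.symm (D'.tgt (g e)))) :
    ContractionIso D D' w w' where
  vMap :=
    { toFun := Quot.lift (fun v => Quot.mk _ (f v)) (by
        rintro _ _ ⟨e, he, rfl, rfl⟩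
        have := mk_src_eq_mk_tgt ((hw e).trans he)
        rcases hends e with ⟨hs, ht⟩ | ⟨hs, ht⟩
        exacts [hs.symm.trans (this.trans ht), ht.symm.trans (this.symm.trans hs)])
      invFun := Quot.lift (fun v => Quot.mk _ (f.symm v)) (by
        rintro _ _ ⟨e, he, rfl, rfl⟩
        obtain ⟨e, rfl⟩ := g.surjective e
        exact hzero e ((hw e).symm.trans he))
      left_inv := by rintro ⟨v⟩; exact congrArg (Quot.mk _) (f.symm_apply_apply v)
      right_inv := by rintro ⟨v⟩; exact congrArg (Quot.mk _) (f.apply_symm_apply v) }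
  eMap := g
  weight_eq := hw
  ends_eq := hends

variable (φ : ContractionIso D D' w w')

/-- `φ` reverses the edge `e`. -/
def Flips (e : D.E) : Prop :=
  ¬ (Quot.mk _ (D'.src (φ.eMap e)) = φ.vMap (Quot.mk _ (D.src e)) ∧
    Quot.mk _ (D'.tgt (φ.eMap e)) = φ.vMap (Quot.mk _ (D.tgt e)))

/-- The map induced by `φ` on the nodes of the subdivisions. -/
def nodeEquiv : (subdivide D w).V ≃ (subdivide D' w').V :=
  Equiv.sumCongr φ.vMap (Equiv.sigmaCongr φ.eMap fun e =>
    positionEquiv (φ.Flips e) (congrArg (· - 1) (φ.weight_eq e).symm))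

theorem nodeEquiv_nodeAt (e : D.E) {j : ℕ} (hj : j ≤ w e) :
    φ.nodeEquiv (nodeAt D w e j) =
      nodeAt D' w' (φ.eMap e) (if φ.Flips e then w e - j else j) := by
  rcases Nat.eq_zero_or_pos j with rfl | hj₀
  · rw [nodeAt_zero]
    split_ifs with hflip
    · rw [Nat.sub_zero, ← φ.weight_eq, nodeAt_last]
      exact congrArg Sum.inl ((φ.ends_eq e).resolve_left hflip).2.symm
    · rw [nodeAt_zero]
      exact congrArg Sum.inl (not_not.1 hflip).1.symm
  rcases hj.lt_or_eq with hj | rfl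
  · have hj' : (if φ.Flips e then w e - j else j) < w' (φ.eMap e) := by
      rw [φ.weight_eq]; split_ifs <;> omega
    rw [nodeAt_inner e hj₀ hj, nodeAt_inner _ (by split_ifs <;> omega) hj']
    refine congrArg Sum.inr (Sigma.ext rfl (heq_of_eq (Fin.ext ?_)))
    refine (val_positionEquiv _ _ _).trans ?_
    by_cases hflip : φ.Flips e
    · simp only [hflip, if_true]
      omega
    · simp only [hflip, if_false]
  · rw [nodeAt_last]
    split_ifs with hflip
    · rw [Nat.sub_self, nodeAt_zero]
      exact congrArg Sum.inl ((φ.ends_eq e).resolve_left hflip).1.symm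
    · rw [← φ.weight_eq, nodeAt_last]
      exact congrArg Sum.inl (not_not.1 hflip).2.symm

/-- The map induced by `φ` on the edges of the subdivisions. -/
def edgeEquiv : (subdivide D w).E ≃ (subdivide D' w').E :=
  Equiv.sigmaCongr φ.eMap fun e => positionEquiv (φ.Flips e) (φ.weight_eq e).symm

theorem edgeEquiv_edgeAt (e : D.E) (j : Fin (w e)) :
    φ.edgeEquiv (edgeAt D w e j) =
      edgeAt D' w' (φ.eMap e) (positionEquiv (φ.Flips e) (φ.weight_eq e).symm j) :=
  rfl

/-- The isomorphism induced by `φ` on the subdivisions. -/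
def subdivideIso : MGIso (subdivide D w) (subdivide D' w') where
  vMap := φ.nodeEquiv
  eMap := φ.edgeEquiv
  ends_eq x := by
    obtain ⟨e, j, rfl⟩ := exists_edgeAt_eq x
    rw [edgeEquiv_edgeAt, src_edgeAt, tgt_edgeAt, src_edgeAt, tgt_edgeAt,
      φ.nodeEquiv_nodeAt e j.2.le, φ.nodeEquiv_nodeAt e j.2, val_positionEquiv]
    split_ifs
    · exact .inr ⟨rfl, congrArg _ (by omega)⟩
    · exact .inl ⟨rfl, rfl⟩

end ContractionIso

theorem IsWeakSubdivision.congr {G : Multigraph} (hG : IsWeakSubdivision G D w)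
    (φ : ContractionIso D D' w w') (hV : D.nV = D'.nV) : IsWeakSubdivision G D' w' := by
  refine ⟨?_, hG.2.map fun ψ => ψ.trans φ.subdivideIso⟩
  have hzeros : #{e | w e = 0} = #{e | w' e = 0} :=
    card_bij (fun e _ => φ.eMap e) (fun e he => by simpa [φ.weight_eq] using he)
      (fun _ _ _ _ h => φ.eMap.injective h)
      fun e he => ⟨φ.eMap.symm e, by simpa [← φ.weight_eq] using he, φ.eMap.apply_symm_apply e⟩
  have hforest := hG.1
  rw [ZeroAcyclic, Fintype.card_congr φ.vMap, hzeros] at hforest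
  exact hforest.trans hV

theorem IsWeakSubdivision.map_iso {G : Multigraph} (hG : IsWeakSubdivision G D w)
    (φ : MGIso D D') : IsWeakSubdivision G D' (w ∘ φ.eMap.symm) := by
  refine hG.congr (.ofEquiv φ.vMap φ.eMap (by simp) (fun e => ?_) fun e he => ?_) φ.nV_eq
  · exact (φ.ends_eq e).imp (.imp (congrArg _) (congrArg _)) (.imp (congrArg _) (congrArg _))
  · rcases φ.ends_eq e with ⟨hs, ht⟩ | ⟨hs, ht⟩
    · simpa [hs, ht] using mk_src_eq_mk_tgt he
    · simpa [hs, ht] using (mk_src_eq_mk_tgt he).symm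

end Contraction

section TwistedPrism

/-- The prism with the two rails into the rung `i` crossed; it is a copy of `K33`. -/
def twistedPrism (i : Fin 3) : Multigraph where
  V := Fin 3 × Bool
  E := (Fin 3 × Bool) ⊕ Fin 3
  src := prism.src
  tgt := fun e => match e with
    | Sum.inl (k, b) => (k + 1, if k + 1 = i then !b else b)
    | Sum.inr k => (k, true)

/-- The vertex part of `twistedPrismIso`: the sides of `K33` alternate along the hexagon formed
by the rails of the twisted prism. -/
def twistedPrismVertexEquiv (i : Fin 3) : Fin 3 × Bool ≃ Fin 3 ⊕ Fin 3 where
  toFun v := if xor v.2 (v.1 = i + 1) then .inl v.1 else .inr v.1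
  invFun := Sum.elim (fun k => (k, k ≠ i + 1)) fun k => (k, k = i + 1)
  left_inv v := by revert i v; decide
  right_inv v := by revert i v; decide

/-- The edge part of `twistedPrismIso`. -/
def twistedPrismEdgeEquiv (i : Fin 3) : (Fin 3 × Bool) ⊕ Fin 3 ≃ Fin 3 × Fin 3 where
  toFun := Sum.elim (fun e => if xor e.2 (e.1 = i + 1) then (e.1, e.1 + 1) else (e.1 + 1, e.1))
    fun k => (k, k)
  invFun e :=
    if e.1 = e.2 then .inr e.1
    else if e.2 = e.1 + 1 then .inl (e.1, e.1 ≠ i + 1) else .inl (e.2, e.2 = i + 1)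
  left_inv e := by revert i e; decide
  right_inv e := by revert i e; decide

/-- The twisted prism is isomorphic to `K33`. -/
def twistedPrismIso (i : Fin 3) : MGIso (twistedPrism i) K33 where
  vMap := twistedPrismVertexEquiv i
  eMap := twistedPrismEdgeEquiv i
  ends_eq := by
    let : DecidableEq K33.V := inferInstanceAs (DecidableEq (Fin 3 ⊕ Fin 3))
    change ∀ e : (Fin 3 × Bool) ⊕ Fin 3, _
    revert i
    decide

theorem exists_isWeakSubdivision_K33_of_twistedPrism {G : Multigraph} {i : Fin 3}
    {w : (twistedPrism i).E → ℕ} (hG : IsWeakSubdivision G (twistedPrism i) w) :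
    ∃ w' : K33.E → ℕ, IsWeakSubdivision G K33 w' :=
  ⟨_, hG.map_iso (twistedPrismIso i)⟩

theorem twistedPrism_tgt_eq_or (i : Fin 3) (e : prism.E) :
    (twistedPrism i).tgt e = prism.tgt e ∨
      ∃ b, (twistedPrism i).tgt e = (i, !b) ∧ prism.tgt e = (i, b) := by
  rcases e with ⟨k, b⟩ | k
  · rcases eq_or_ne (k + 1) i with rfl | hk
    exacts [.inr ⟨b, congrArg _ (if_pos rfl), rfl⟩, .inl (congrArg _ (if_neg hk))]
  · exact .inl rfl

theorem IsWeakSubdivision.twistedPrism_of_rung_eq_zero {G : Multigraph} {w : prism.E → ℕ}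
    (hG : IsWeakSubdivision G prism w) {i : Fin 3} (hi : w (Sum.inr i) = 0) :
    IsWeakSubdivision G (twistedPrism i) w := by
  have htwisted (b : Bool) : Quot.mk (zeroRel (twistedPrism i) w) (i, !b) = Quot.mk _ (i, b) := by
    have := mk_src_eq_mk_tgt (D := twistedPrism i) hi
    cases b
    exacts [this.symm, this]
  have hprism (b : Bool) : Quot.mk (zeroRel prism w) (i, !b) = Quot.mk _ (i, b) := by
    have := mk_src_eq_mk_tgt (D := prism) hi
    cases b
    exacts [this.symm, this]
  refine hG.congr (.ofEquiv (D' := twistedPrism i) (.refl _) (.refl _) (fun e => rfl)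
    (fun e => .inl ⟨rfl, ?_⟩) fun e he => ?_) rfl
  · change Quot.mk _ ((twistedPrism i).tgt e) = Quot.mk _ (prism.tgt e)
    obtain h | ⟨b, h, h'⟩ := twistedPrism_tgt_eq_or i e
    exacts [congrArg _ h, h ▸ h' ▸ htwisted b]
  · refine (mk_src_eq_mk_tgt he).trans ?_
    change Quot.mk _ (prism.tgt e) = Quot.mk _ ((twistedPrism i).tgt e)
    obtain h | ⟨b, h, h'⟩ := twistedPrism_tgt_eq_or i e
    exacts [congrArg _ h.symm, h ▸ h' ▸ (hprism b).symm]

end TwistedPrism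

section CyclicSets

namespace Multigraph

variable (G : Multigraph) {H : Multigraph}

/-- The edges with both ends in `A`. -/
def inducedEdges (A : Finset G.V) : Finset G.E := {e | G.src e ∈ A ∧ G.tgt e ∈ A}

/-- `A` induces at least as many edges as it has vertices; such a set contains a cycle. -/
def Cyclic (A : Finset G.V) : Prop := A.Nonempty ∧ #A ≤ #(G.inducedEdges A)

/-- `G` contains two vertex-disjoint cycles. -/
def HasDisjointCycles : Prop := ∃ A B, Disjoint A B ∧ G.Cyclic A ∧ G.Cyclic B

variable {G}

theorem mem_inducedEdges {A : Finset G.V} {e : G.E} :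
    e ∈ G.inducedEdges A ↔ G.src e ∈ A ∧ G.tgt e ∈ A := by
  simp [inducedEdges]

theorem Cyclic.map_iso {A : Finset G.V} (hA : G.Cyclic A) (φ : MGIso G H) :
    H.Cyclic (A.map φ.vMap.toEmbedding) := by
  refine ⟨hA.1.map, (card_map _).trans_le (hA.2.trans ?_)⟩
  refine card_le_card_of_injOn φ.eMap (fun e he => ?_) φ.eMap.injective.injOn
  obtain ⟨hs, ht⟩ := mem_inducedEdges.1 he
  refine mem_coe.2 (mem_inducedEdges.2 ?_)
  rcases φ.ends_eq e with h | h <;> simp [h, hs, ht]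

theorem HasDisjointCycles.map_iso (hG : G.HasDisjointCycles) (φ : MGIso G H) :
    H.HasDisjointCycles := by
  obtain ⟨A, B, hAB, hA, hB⟩ := hG
  exact ⟨_, _, (disjoint_map _).2 hAB, hA.map_iso φ, hB.map_iso φ⟩

end Multigraph

theorem not_hasDisjointCycles_K33 : ¬ K33.HasDisjointCycles := by
  have two_le {A : Finset (Fin 3 ⊕ Fin 3)} (hA : K33.Cyclic A) : 2 ≤ #A.toLeft := by
    have hedges : K33.inducedEdges A = A.toLeft ×ˢ A.toRight := by
      ext e
      exact Multigraph.mem_inducedEdges.trans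
        ((mem_toLeft.symm.and mem_toRight.symm).trans mem_product.symm)
    have hle : #A ≤ #A.toLeft * #A.toRight :=
      hA.2.trans_eq ((congrArg card hedges).trans (card_product _ _))
    have hpos : 0 < #A := hA.1.card_pos
    rw [← card_toLeft_add_card_toRight] at hle hpos
    by_contra! h
    interval_cases #A.toLeft <;> omega
  rintro ⟨A, B, hAB, hA, hB⟩
  have hdisj : Disjoint (toLeft A) (toLeft B) :=
    disjoint_left.2 fun i hi hi' => disjoint_left.1 hAB (mem_toLeft.1 hi) (mem_toLeft.1 hi')
  have hcard := card_le_univ (toLeft A ∪ toLeft B)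
  rw [card_union_of_disjoint hdisj, Fintype.card_fin] at hcard
  have := two_le hA
  have := two_le hB
  omega

end CyclicSets

theorem card_filter_range_succ_and_lt {P : ℕ → Prop} [DecidablePred P] {n : ℕ} (hP : ∃ j ≤ n, P j) :
    #{j ∈ range n | P j ∧ P (j + 1)} < #{j ∈ range (n + 1) | P j} := by
  induction n with
  | zero =>
    obtain ⟨j, hj, hPj⟩ := hP
    obtain rfl := Nat.le_zero.1 hj
    exact lt_of_eq_of_lt (by simp) (card_pos.2 ⟨0, by simpa using hPj⟩)
  | succ n ih =>
    rw [range_add_one (n := n), filter_insert, range_add_one (n := n + 1), filter_insert]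
    by_cases hlast : P (n + 1)
    · rw [if_pos hlast, card_insert_of_notMem (by simp)]
      by_cases hn : ∃ j ≤ n, P j
      · refine lt_of_le_of_lt ?_ (Nat.succ_lt_succ (ih hn))
        split_ifs
        exacts [card_insert_le _ _, Nat.le_succ _]
      · push Not at hn
        rw [if_neg fun h => hn n le_rfl h.1, filter_false_of_mem fun j hj h =>
          hn j (mem_range.1 hj).le h.1]
        exact Nat.succ_pos _
    · obtain ⟨j, hj, hPj⟩ := hP
      have hjn : j ≠ n + 1 := fun h => hlast (h ▸ hPj)
      rw [if_neg hlast, if_neg fun h => hlast h.2]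
      exact ih ⟨j, by omega, hPj⟩

section SubdividedCyclicSets

variable {D : Multigraph} {w : D.E → ℕ}

variable (D w) in
/-- No zero-weight edge leaves `A`. -/
def ZeroClosed (A : Finset D.V) : Prop := ∀ e, w e = 0 → (D.src e ∈ A ↔ D.tgt e ∈ A)

variable (D w) in
/-- The classes of the vertices of `A` under the contraction of the zero-weight edges. -/
def zeroClasses (A : Finset D.V) : Finset (Quot (zeroRel D w)) := A.image (Quot.mk _)

variable (D w) in
/-- The zero-weight edges with both ends in `A`. -/
def zeroEdges (A : Finset D.V) : Finset D.E := {e ∈ D.inducedEdges A | w e = 0}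

variable {A : Finset D.V}

theorem ZeroClosed.compl (hA : ZeroClosed D w A) : ZeroClosed D w Aᶜ := fun e he => by
  simp only [mem_compl, hA e he]

theorem ZeroClosed.mk_mem_zeroClasses (hA : ZeroClosed D w A) {v : D.V} :
    Quot.mk _ v ∈ zeroClasses D w A ↔ v ∈ A := by
  refine ⟨fun hv => ?_, fun hv => mem_image_of_mem _ hv⟩
  obtain ⟨u, hu, huv⟩ := mem_image.1 hv
  have := congrArg
    (Quot.lift (· ∈ A) (by rintro _ _ ⟨e, he, rfl, rfl⟩; exact propext (hA e he))) huv
  exact cast this hu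

theorem ZeroClosed.card_le (hA : ZeroClosed D w A) :
    #A ≤ #(zeroClasses D w A) + #(zeroEdges D w A) := by
  let toComponent : Quot (zeroRel D w) → Option (Quot (D.edgeRel (zeroEdges D w A))) :=
    Quot.lift (fun v => if v ∈ A then some (Quot.mk _ v) else none) (by
      rintro _ _ ⟨e, he, rfl, rfl⟩
      by_cases hs : D.src e ∈ A
      · have ht := (hA e he).1 hs
        have he' : e ∈ zeroEdges D w A :=
          mem_filter.2 ⟨Multigraph.mem_inducedEdges.2 ⟨hs, ht⟩, he⟩
        rw [if_pos hs, if_pos ht, Quot.sound ⟨e, he', rfl, rfl⟩]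
      · rw [if_neg hs, if_neg (mt (hA e he).2 hs)])
  have hcover : (univ : Finset (Quot (D.edgeRel (zeroEdges D w A)))).image some ⊆
      (zeroClasses D w A).image toComponent ∪ Aᶜ.image (fun v => some (Quot.mk _ v)) := by
    intro x hx
    obtain ⟨⟨v⟩, -, rfl⟩ := mem_image.1 hx
    by_cases hv : v ∈ A
    · exact mem_union_left _ (mem_image.2 ⟨_, mem_image_of_mem _ hv, if_pos hv⟩)
    · exact mem_union_right _ (mem_image_of_mem _ (mem_compl.2 hv))
  have hcard := (card_le_card hcover).trans
    ((card_union_le _ _).trans (add_le_add card_image_le card_image_le))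
  rw [card_image_of_injective _ (Option.some_injective _), card_univ] at hcard
  have hforest := D.nV_le_numComponents_add_card (zeroEdges D w A)
  have := card_add_card_compl A
  rw [Multigraph.nV, Multigraph.numComponents] at hforest
  omega

theorem ZeroClosed.card_eq (hA : ZeroClosed D w A) (hw : ZeroAcyclic D w) :
    #(zeroClasses D w A) + #(zeroEdges D w A) = #A := by
  have hclasses :
      #(zeroClasses D w A) + #(zeroClasses D w Aᶜ) ≤ Fintype.card (Quot (zeroRel D w)) := by
    rw [← card_union_of_disjoint]
    · exact card_le_univ _
    · refine disjoint_left.2 ?_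
      rintro ⟨v⟩ hv hv'
      exact mem_compl.1 (hA.compl.mk_mem_zeroClasses.1 hv') (hA.mk_mem_zeroClasses.1 hv)
  have hedges : #(zeroEdges D w A) + #(zeroEdges D w Aᶜ) ≤ #{e | w e = 0} := by
    rw [← card_union_of_disjoint]
    · exact card_le_card (union_subset (filter_subset_filter _ (subset_univ _))
        (filter_subset_filter _ (subset_univ _)))
    · refine disjoint_left.2 fun e he he' => ?_
      simp only [zeroEdges, mem_filter, Multigraph.mem_inducedEdges, mem_compl] at he he'
      exact he'.1.1 he.1.1
  have := hA.card_le
  have := hA.compl.card_le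
  have := card_add_card_compl A
  rw [ZeroAcyclic] at hw
  omega

theorem card_zeroEdges_add_card_filter_pos (A : Finset D.V) :
    #(zeroEdges D w A) + #{e ∈ D.inducedEdges A | 0 < w e} = #(D.inducedEdges A) := by
  simp only [Nat.pos_iff_ne_zero]
  exact card_filter_add_card_filter_not _

variable {B : Finset (subdivide D w).V}

/-- The vertices of `D` whose node in the subdivision lies in `B`. -/
def corners (B : Finset (subdivide D w).V) : Finset D.V := {v | cornerNode D w v ∈ B}

/-- The positions of the inner nodes of the chain of `e` that lie in `B`, shifted by one. -/
def innerNodes (B : Finset (subdivide D w).V) (e : D.E) : Finset ℕ :=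
  {j ∈ range (w e - 1) | nodeAt D w e (j + 1) ∈ B}

/-- The positions of the edges of the chain of `e` that have both ends in `B`. -/
def chainEdges (B : Finset (subdivide D w).V) (e : D.E) : Finset ℕ :=
  {j ∈ range (w e) | nodeAt D w e j ∈ B ∧ nodeAt D w e (j + 1) ∈ B}

theorem mem_corners {v : D.V} : v ∈ corners B ↔ cornerNode D w v ∈ B := by simp [corners]

theorem zeroClosed_corners (B : Finset (subdivide D w).V) : ZeroClosed D w (corners B) :=
  fun e he => by rw [mem_corners, mem_corners, cornerNode_src_eq_tgt he]

theorem card_eq_card_zeroClasses_add_sum (B : Finset (subdivide D w).V) :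
    #B = #(zeroClasses D w (corners B)) + ∑ e, #(innerNodes B e) := by
  have hclasses : toLeft B = zeroClasses D w (corners B) := by
    ext ⟨v⟩
    exact mem_toLeft.trans (mem_corners.symm.trans (zeroClosed_corners B).mk_mem_zeroClasses.symm)
  have hinner : toRight B =
      univ.sigma fun e => univ.filter fun j : Fin (w e - 1) => nodeAt D w e (j + 1) ∈ B := by
    ext ⟨e, j⟩
    have hnode : nodeAt D w e (j + 1) = Sum.inr ⟨e, j⟩ := nodeAt_inner e j.val.succ_pos (by omega)
    refine mem_toRight.trans (Iff.trans ?_ mem_sigma.symm)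
    simp only [mem_univ, true_and, mem_filter, hnode]
    rfl
  refine (card_toLeft_add_card_toRight (u := B)).symm.trans ?_
  rw [hclasses, hinner, card_sigma]
  refine congrArg _ (sum_congr rfl fun e _ => ?_)
  rw [innerNodes, card_filter, card_filter]
  exact Fin.sum_univ_eq_sum_range (fun j => if nodeAt D w e (j + 1) ∈ B then 1 else 0) _

theorem card_inducedEdges_eq_sum (B : Finset (subdivide D w).V) :
    #((subdivide D w).inducedEdges B) = ∑ e, #(chainEdges B e) := by
  have hsigma : (subdivide D w).inducedEdges B = univ.sigma fun e =>
      univ.filter fun j : Fin (w e) => nodeAt D w e j ∈ B ∧ nodeAt D w e (j + 1) ∈ B := by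
    ext x
    refine Multigraph.mem_inducedEdges.trans ?_
    obtain ⟨e, j, rfl⟩ := exists_edgeAt_eq x
    rw [src_edgeAt, tgt_edgeAt]
    refine Iff.trans ?_ mem_sigma.symm
    simp only [mem_univ, true_and, mem_filter]
    rfl
  refine (congrArg card hsigma).trans ((card_sigma _ _).trans (sum_congr rfl fun e _ => ?_))
  rw [chainEdges, card_filter, card_filter]
  exact Fin.sum_univ_eq_sum_range
    (fun j => if nodeAt D w e j ∈ B ∧ nodeAt D w e (j + 1) ∈ B then 1 else 0) _

theorem card_chainEdges_lt {e : D.E} (he : 0 < w e) (hB : ∃ j ≤ w e, nodeAt D w e j ∈ B) :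
    #(chainEdges B e) < #(innerNodes B e) +
      ((if D.src e ∈ corners B then 1 else 0) + if D.tgt e ∈ corners B then 1 else 0) := by
  refine (card_filter_range_succ_and_lt hB).trans_eq ?_
  have hlen : w e - 1 + 1 = w e := Nat.sub_add_cancel he
  have hsrc : D.src e ∈ corners B ↔ nodeAt D w e 0 ∈ B := by rw [mem_corners, nodeAt_zero]
  have htgt : D.tgt e ∈ corners B ↔ nodeAt D w e (w e) ∈ B := by rw [mem_corners, nodeAt_last]
  have hhead := sum_range_succ' (fun j => if nodeAt D w e j ∈ B then 1 else 0) (w e - 1)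
  rw [hlen] at hhead
  simp only [card_filter, sum_range_succ _ (w e), innerNodes, hsrc, htgt, hhead, add_assoc]

theorem card_chainEdges_le (B : Finset (subdivide D w).V) (e : D.E) :
    #(chainEdges B e) ≤
      #(innerNodes B e) + if e ∈ D.inducedEdges (corners B) ∧ 0 < w e then 1 else 0 := by
  by_cases hB : 0 < w e ∧ ∃ j ≤ w e, nodeAt D w e j ∈ B
  · have := card_chainEdges_lt hB.1 hB.2
    simp only [Multigraph.mem_inducedEdges]
    split_ifs at this ⊢ <;> first | omega | tauto
  · have hempty : chainEdges B e = ∅ := filter_false_of_mem fun j hj h =>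
      hB ⟨Nat.zero_lt_of_lt (mem_range.1 hj), j, (mem_range.1 hj).le, h.1⟩
    simp [hempty]

theorem card_lt_of_corners_eq_empty (hne : B.Nonempty) (hB : corners B = ∅) :
    #((subdivide D w).inducedEdges B) < #B := by
  have hcorner (v : D.V) : v ∉ corners B := hB ▸ notMem_empty v
  obtain ⟨u, hu⟩ := hne
  rw [card_eq_card_zeroClasses_add_sum, card_inducedEdges_eq_sum, hB, zeroClasses, image_empty,
    card_empty, zero_add]
  refine sum_lt_sum (fun e _ => ?_) ?_
  · simpa [Multigraph.mem_inducedEdges, hcorner] using card_chainEdges_le B e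
  · obtain ⟨v, rfl⟩ | ⟨e, j, hj₀, hj, rfl⟩ := node_cases u
    · exact absurd (mem_corners.2 hu) (hcorner v)
    · have := card_chainEdges_lt (hj₀.trans hj) ⟨j, hj.le, hu⟩
      exact ⟨e, mem_univ e, by simpa [hcorner] using this⟩

theorem Multigraph.Cyclic.corners (hB : (subdivide D w).Cyclic B) : D.Cyclic (corners B) := by
  refine ⟨nonempty_iff_ne_empty.2 fun h => (card_lt_of_corners_eq_empty hB.1 h).not_ge hB.2, ?_⟩
  have hedges := sum_le_sum fun e (_ : e ∈ univ) => card_chainEdges_le B e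
  rw [← card_inducedEdges_eq_sum, sum_add_distrib, ← card_filter] at hedges
  have hpos := card_zeroEdges_add_card_filter_pos (w := w) (_root_.corners B)
  rw [← filter_filter, filter_univ_mem] at hedges
  have := card_eq_card_zeroClasses_add_sum B
  have := (zeroClosed_corners B).card_le
  have := hB.2
  omega

theorem Multigraph.HasDisjointCycles.of_subdivide (h : (subdivide D w).HasDisjointCycles) :
    D.HasDisjointCycles := by
  obtain ⟨A, B, hAB, hA, hB⟩ := h
  exact ⟨_, _, disjoint_left.2 fun v hv hv' =>
    disjoint_left.1 hAB (mem_corners.1 hv) (mem_corners.1 hv'), hA.corners, hB.corners⟩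

variable (D w) in
/-- The nodes of the subdivision on the chains with both ends in `A`. -/
def nodesOver (A : Finset D.V) : Finset (subdivide D w).V :=
  (zeroClasses D w A).disjSum ((D.inducedEdges A).sigma fun _ => univ)

theorem nodeAt_mem_nodesOver {e : D.E} (he : e ∈ D.inducedEdges A) {j : ℕ} (hj : j ≤ w e) :
    nodeAt D w e j ∈ nodesOver D w A := by
  obtain ⟨hs, ht⟩ := Multigraph.mem_inducedEdges.1 he
  obtain rfl | hj₀ := Nat.eq_zero_or_pos j
  · rw [nodeAt_zero]
    exact inl_mem_disjSum.2 (mem_image_of_mem _ hs)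
  obtain rfl | hj := hj.eq_or_lt
  · rw [nodeAt_last]
    exact inl_mem_disjSum.2 (mem_image_of_mem _ ht)
  · rw [nodeAt_inner e hj₀ hj]
    exact inr_mem_disjSum.2 (mem_sigma.2 ⟨he, mem_univ _⟩)

theorem Multigraph.Cyclic.nodesOver (hA : D.Cyclic A) (hzero : ZeroClosed D w A)
    (hw : ZeroAcyclic D w) : (subdivide D w).Cyclic (nodesOver D w A) := by
  obtain ⟨v, hv⟩ := hA.1
  refine ⟨⟨_, inl_mem_disjSum.2 (mem_image_of_mem _ hv)⟩, ?_⟩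
  have hchains : ∑ e ∈ D.inducedEdges A, w e ≤
      #((subdivide D w).inducedEdges (_root_.nodesOver D w A)) := by
    refine Eq.trans_le ?_ (card_le_card (s := (D.inducedEdges A).sigma fun _ => univ) ?_)
    · simp
    · rintro ⟨e, j⟩ he
      replace he := (mem_sigma.1 he).1
      exact mem_inducedEdges.2 ⟨nodeAt_mem_nodesOver he j.2.le, nodeAt_mem_nodesOver he j.2⟩
  have hnodes : #(_root_.nodesOver D w A) =
      #(zeroClasses D w A) + ∑ e ∈ D.inducedEdges A, (w e - 1) :=
    (card_disjSum _ _).trans (by simp)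
  have hlength : ∑ e ∈ D.inducedEdges A, w e =
      ∑ e ∈ D.inducedEdges A, (w e - 1) + #{e ∈ D.inducedEdges A | 0 < w e} := by
    rw [card_filter, ← sum_add_distrib]
    exact sum_congr rfl fun e _ => by split_ifs <;> omega
  have := hzero.card_eq hw
  have := card_zeroEdges_add_card_filter_pos (w := w) A
  have := hA.2
  omega

theorem disjoint_nodesOver {A' : Finset D.V} (hA : ZeroClosed D w A) (hA' : ZeroClosed D w A')
    (h : Disjoint A A') : Disjoint (nodesOver D w A) (nodesOver D w A') := by
  refine disjoint_left.2 ?_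
  rintro (v | ⟨e, j⟩) hu hu'
  · obtain ⟨v, rfl⟩ := Quot.exists_rep v
    exact disjoint_left.1 h (hA.mk_mem_zeroClasses.1 (inl_mem_disjSum.1 hu))
      (hA'.mk_mem_zeroClasses.1 (inl_mem_disjSum.1 hu'))
  · have he := (mem_sigma.1 (inr_mem_disjSum.1 hu)).1
    have he' := (mem_sigma.1 (inr_mem_disjSum.1 hu')).1
    exact disjoint_left.1 h (Multigraph.mem_inducedEdges.1 he).1
      (Multigraph.mem_inducedEdges.1 he').1

end SubdividedCyclicSets

/-- The triangle of the prism formed by the rails on side `b`. -/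
def prismTriangle (b : Bool) : Finset prism.V := (univ : Finset (Fin 3)) ×ˢ {b}

theorem mem_prismTriangle {i : Fin 3} {b c : Bool} :
    ((i, c) : prism.V) ∈ prismTriangle b ↔ c = b :=
  mem_product.trans (by simp)

theorem cyclic_prismTriangle (b : Bool) : prism.Cyclic (prismTriangle b) := by
  have hvertices : #(prismTriangle b) = 3 := card_product _ _
  refine ⟨card_pos.1 (hvertices ▸ three_pos), hvertices.trans_le ?_⟩
  refine (Fintype.card_fin 3).symm.trans_le (card_le_card_of_injOn (s := (univ : Finset (Fin 3)))
    (fun i => Sum.inl (i, b)) (fun i _ => ?_) fun i _ j _ h => ?_)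
  · exact mem_coe.2 (Multigraph.mem_inducedEdges.2
      ⟨mem_prismTriangle.2 rfl, mem_prismTriangle.2 rfl⟩)
  · exact congrArg Prod.fst (Sum.inl.inj h)

section PrismSubdivision

variable {G : Multigraph} {w : prism.E → ℕ}

theorem zeroClosed_prismTriangle (hr : ∀ i, 0 < w (Sum.inr i)) (b : Bool) :
    ZeroClosed prism w (prismTriangle b) := by
  rintro (⟨i, c⟩ | i) he
  · exact mem_prismTriangle (i := i).trans (mem_prismTriangle (i := i + 1)).symm
  · exact absurd he (hr i).ne'

theorem IsWeakSubdivision.hasDisjointCycles_of_prism (hG : IsWeakSubdivision G prism w)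
    (hr : ∀ i, 0 < w (Sum.inr i)) : G.HasDisjointCycles := by
  obtain ⟨hw, ⟨φ⟩⟩ := hG
  have hcyclic (b : Bool) :=
    (cyclic_prismTriangle b).nodesOver (zeroClosed_prismTriangle hr b) hw
  have hdisj : Disjoint (prismTriangle false) (prismTriangle true) :=
    disjoint_product.2 (.inr (by simp))
  exact Multigraph.HasDisjointCycles.map_iso ⟨_, _, disjoint_nodesOver
    (zeroClosed_prismTriangle hr _) (zeroClosed_prismTriangle hr _) hdisj, hcyclic _, hcyclic _⟩
    φ.symm

theorem IsWeakSubdivision.not_hasDisjointCycles {w' : K33.E → ℕ}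
    (hG : IsWeakSubdivision G K33 w') : ¬ G.HasDisjointCycles := fun h => by
  obtain ⟨φ⟩ := hG.2
  exact not_hasDisjointCycles_K33 (h.map_iso φ).of_subdivide

theorem IsWeakSubdivision.not_exists_K33_iff (hG : IsWeakSubdivision G prism w) :
    (¬ ∃ w' : K33.E → ℕ, IsWeakSubdivision G K33 w') ↔ ∀ i, 0 < w (Sum.inr i) := by
  refine ⟨fun h i => Nat.pos_of_ne_zero fun hi => h ?_, fun hr => ?_⟩
  · exact exists_isWeakSubdivision_K33_of_twistedPrism (hG.twistedPrism_of_rung_eq_zero hi)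
  · rintro ⟨w', hG'⟩
    exact hG'.not_hasDisjointCycles (hG.hasDisjointCycles_of_prism hr)

end PrismSubdivision

section SmallCuts

/-- The elementary symmetric sum of degree `k` of the weights, restricted to the products that
are divisible by the product over `X`. -/
def supersetSum {E : Type*} [Fintype E] (w : E → ℕ) (X : Finset E) (k : ℕ) : ℕ :=
  ∑ T ∈ powersetCard k univ with X ⊆ T, ∏ e ∈ T, w e

section SupersetSum

variable {E : Type*} [Fintype E] (w : E → ℕ) (X : Finset E)

theorem supersetSum_card_add (j : ℕ) :
    supersetSum w X (#X + j) = (∏ e ∈ X, w e) * (Xᶜ.val.map w).esymm j := by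
  rw [esymm_map_val, mul_sum]
  have hdisj {S : Finset E} (hS : S ∈ powersetCard j Xᶜ) : Disjoint X S :=
    (disjoint_compl_right (a := X)).mono_right (mem_powersetCard.1 hS).1
  refine sum_nbij' (· \ X) (X ∪ ·) (fun T hT => ?_) (fun S hS => ?_) (fun T hT => ?_)
    (fun S hS => ?_) fun T hT => ?_
  · obtain ⟨hT, hXT⟩ := mem_filter.1 hT
    refine mem_powersetCard.2 ⟨fun e he => mem_compl.2 (mem_sdiff.1 he).2, ?_⟩
    rw [card_sdiff_of_subset hXT, (mem_powersetCard.1 hT).2, Nat.add_sub_cancel_left]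
  · exact mem_filter.2 ⟨mem_powersetCard.2 ⟨subset_univ _, by
      rw [card_union_of_disjoint (hdisj hS), (mem_powersetCard.1 hS).2]⟩, subset_union_left⟩
  · exact union_sdiff_of_subset (mem_filter.1 hT).2
  · exact union_sdiff_cancel_left (hdisj hS)
  · rw [mul_comm, prod_sdiff (mem_filter.1 hT).2]

theorem supersetSum_card : supersetSum w X #X = ∏ e ∈ X, w e := by
  simpa [esymm_map_val] using supersetSum_card_add w X 0

theorem supersetSum_card_succ :
    supersetSum w X (#X + 1) + (∏ e ∈ X, w e) * ∑ e ∈ X, w e = (∏ e ∈ X, w e) * ∑ e, w e := by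
  rw [supersetSum_card_add, ← mul_add, esymm_map_val, powersetCard_one, sum_map]
  simp [sum_compl_add_sum]

variable {X} in
theorem supersetSum_of_lt_card {k : ℕ} (hk : k < #X) : supersetSum w X k = 0 := by
  rw [supersetSum, filter_false_of_mem, sum_empty]
  exact fun T hT hXT => ((card_le_card hXT).trans_eq (mem_powersetCard.1 hT).2).not_gt hk

end SupersetSum

namespace Multigraph

variable {G : Multigraph} {ι : Type*} {B : ι → Finset G.E} {k m : ℕ}

/-- The sets `B i` are disconnections, and each disconnection with at most `m` edges contains
exactly one of them. -/
structure ClassifiesCuts (G : Multigraph) (B : ι → Finset G.E) (m : ℕ) : Prop where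
  disconnects : ∀ i, G.Disconnects (B i)
  exists_subset : ∀ F, #F ≤ m → G.Disconnects F → ∃ i, B i ⊆ F
  lt_card_union : ∀ i j, i ≠ j → m < #(B i ∪ B j)

theorem Disconnects.mono {F F' : Finset G.E} (hF : G.Disconnects F) (h : F ⊆ F') :
    G.Disconnects F' := by
  obtain ⟨A, hne, huniv, hA⟩ := G.disconnects_iff_exists_cutEdges_subset.1 hF
  exact G.disconnects_iff_exists_cutEdges_subset.2 ⟨A, hne, huniv, hA.trans h⟩

theorem ClassifiesCuts.of_forall_crosses [DecidableEq G.V] [DecidableEq G.E]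
    (hB : ∀ i, ∃ A : Finset G.V, A ≠ ∅ ∧ A ≠ univ ∧
      ∀ e, ¬(G.src e ∈ A ↔ G.tgt e ∈ A) → e ∈ B i)
    (hcover : ∀ A : Finset G.V, A ≠ ∅ → A ≠ univ →
      m < #{e | ¬(G.src e ∈ A ↔ G.tgt e ∈ A)} ∨
        ∃ i, ∀ e ∈ B i, ¬(G.src e ∈ A ↔ G.tgt e ∈ A))
    (hunion : ∀ i j, i ≠ j → m < #(B i ∪ B j)) : G.ClassifiesCuts B m where
  disconnects i := by
    obtain ⟨A, hne, huniv, hA⟩ := hB i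
    exact G.disconnects_iff_exists_cutEdges_subset.2
      ⟨A, nonempty_iff_ne_empty.2 hne, huniv, fun e he => hA e (G.mem_cutEdges.1 he)⟩
  exists_subset F hF hdis := by
    obtain ⟨A, hne, huniv, hA⟩ := G.disconnects_iff_exists_cutEdges_subset.1 hdis
    obtain hlt | ⟨i, hi⟩ := hcover A hne.ne_empty huniv
    · refine absurd ((card_le_card fun e he => hA (G.mem_cutEdges.2 ?_)).trans hF) hlt.not_ge
      exact (mem_filter.1 he).2
    · exact ⟨i, fun e he => hA (G.mem_cutEdges.2 (hi e he))⟩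
  lt_card_union i j hij := by convert hunion i j hij

theorem ClassifiesCuts.chainSum_add_sum [Fintype ι] (hB : G.ClassifiesCuts B m) (w : G.E → ℕ)
    (hk : k ≤ m) :
    chainSum G w k + ∑ i, supersetSum w (B i) k = (univ.val.map w).esymm k := by
  have hconn : G.nonDisconnections k =
      {T ∈ powersetCard k (univ : Finset G.E) | G.ConnOn (univ \ T)} := by
    ext T
    simp [mem_nonDisconnections]
  have hdis : {T ∈ powersetCard k (univ : Finset G.E) | ¬G.ConnOn (univ \ T)} =
      (univ : Finset ι).biUnion fun i => {T ∈ powersetCard k univ | B i ⊆ T} := by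
    ext T
    simp only [mem_filter, mem_powersetCard_univ, mem_biUnion, mem_univ, true_and]
    refine ⟨?_, fun ⟨i, hT, hi⟩ => ⟨hT, (hB.disconnects i).mono hi⟩⟩
    rintro ⟨hT, h⟩
    obtain ⟨i, hi⟩ := hB.exists_subset T (hT.trans_le hk) h
    exact ⟨i, hT, hi⟩
  rw [esymm_map_val, ← sum_filter_add_sum_filter_not _ fun T => G.ConnOn (univ \ T), ← hconn, hdis,
    sum_biUnion]
  · rfl
  · refine fun i _ j _ hij => disjoint_left.2 fun T hi hj => (hB.lt_card_union i j hij).not_ge ?_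
    obtain ⟨hT, hi⟩ := mem_filter.1 hi
    exact (card_le_card (union_subset hi (mem_filter.1 hj).2)).trans
      ((mem_powersetCard.1 hT).2.trans_le hk)

end Multigraph

end SmallCuts

instance : DecidableEq (twistedPrism 0).V := inferInstanceAs (DecidableEq (Fin 3 × Bool))

instance : DecidableEq (twistedPrism 0).E :=
  inferInstanceAs (DecidableEq ((Fin 3 × Bool) ⊕ Fin 3))

instance : DecidableEq prism.V := inferInstanceAs (DecidableEq (Fin 3 × Bool))

instance : DecidableEq prism.E := inferInstanceAs (DecidableEq ((Fin 3 × Bool) ⊕ Fin 3))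

section LadderCuts

/-- The end of the rail starting at `v`, in the prism (`t = false`) or in `twistedPrism 0`
(`t = true`). -/
def railSucc (t : Bool) (v : Fin 3 × Bool) : Fin 3 × Bool := (v.1 + 1, xor v.2 (t && v.1 + 1 = 0))

/-- The start of the rail ending at `v`, in the prism (`t = false`) or in `twistedPrism 0`
(`t = true`). -/
def railPred (t : Bool) (v : Fin 3 × Bool) : Fin 3 × Bool := (v.1 + 2, xor v.2 (t && v.1 = 0))

/-- The cuts around a vertex and around the two ends of an edge, in the prism (`t = false`) or in
`twistedPrism 0` (`t = true`). -/
def ladderCut (t : Bool) :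
    (Fin 3 × Bool) ⊕ ((Fin 3 × Bool) ⊕ Fin 3) → Finset ((Fin 3 × Bool) ⊕ Fin 3)
  | .inl v => {.inl v, .inl (railPred t v), .inr v.1}
  | .inr (.inl v) => {.inl (railPred t v), .inr v.1, .inl (railSucc t v), .inr (v.1 + 1)}
  | .inr (.inr k) => {.inl (k, false), .inl (railPred t (k, false)), .inl (k, true),
      .inl (railPred t (k, true))}

/-- `ladderCut true`, as a family of edge sets of the twisted prism. -/
def twistedPrismCut :
    (Fin 3 × Bool) ⊕ ((Fin 3 × Bool) ⊕ Fin 3) → Finset (twistedPrism 0).E := ladderCut true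

/-- The cut between the two triangles of the prism, and the cuts around a vertex and around the two
ends of an edge. -/
def prismCut : Option ((Fin 3 × Bool) ⊕ ((Fin 3 × Bool) ⊕ Fin 3)) → Finset prism.E
  | none => {.inr 0, .inr 1, .inr 2}
  | some i => ladderCut false i

theorem classifiesCuts_twistedPrism : (twistedPrism 0).ClassifiesCuts twistedPrismCut 4 := by
  refine .of_forall_crosses ?_ ?_ ?_ <;> decide +kernel

theorem classifiesCuts_prism : prism.ClassifiesCuts prismCut 4 := by
  refine .of_forall_crosses ?_ ?_ ?_ <;> decide +kernel

end LadderCuts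

theorem esymm_cons {R : Type*} [CommSemiring R] (a : R) (s : Multiset R) (k : ℕ) :
    (a ::ₘ s).esymm (k + 1) = s.esymm (k + 1) + a * s.esymm k := by
  simp [Multiset.esymm, Multiset.powersetCard_cons, Multiset.sum_map_mul_left]

theorem esymm_zero {R : Type*} [CommSemiring R] (s : Multiset R) : s.esymm 0 = 1 := by
  simp [Multiset.esymm]

theorem esymm_one {R : Type*} [CommSemiring R] (s : Multiset R) : s.esymm 1 = s.sum := by
  simp [Multiset.esymm, Multiset.powersetCard_one]

theorem zero_esymm_succ {R : Type*} [CommSemiring R] (k : ℕ) :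
    (0 : Multiset R).esymm (k + 1) = 0 := by
  simp [Multiset.esymm, Multiset.powersetCard_zero_right]

section LadderSums

variable (t : Bool) (w : (Fin 3 × Bool) ⊕ Fin 3 → ℕ)

theorem sum_supersetSum_ladderCut_eq_zero {k : ℕ} (hk : k < 3) :
    ∑ i, supersetSum w (ladderCut t i) k = 0 :=
  sum_eq_zero fun i _ => supersetSum_of_lt_card w (hk.trans_le (by revert t i; decide))

theorem card_ladderCut_inl (v : Fin 3 × Bool) : #(ladderCut t (.inl v)) = 3 := by
  revert t v; decide

theorem card_ladderCut_inr (e : (Fin 3 × Bool) ⊕ Fin 3) : #(ladderCut t (.inr e)) = 4 := by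
  revert t e; decide

theorem sum_supersetSum_ladderCut_three :
    ∑ i, supersetSum w (ladderCut t i) 3 = ∑ v, ∏ e ∈ ladderCut t (.inl v), w e := by
  have hinl (v : Fin 3 × Bool) :
      supersetSum w (ladderCut t (.inl v)) 3 = ∏ e ∈ ladderCut t (.inl v), w e := by
    rw [← supersetSum_card, card_ladderCut_inl]
  have hinr (e : (Fin 3 × Bool) ⊕ Fin 3) : supersetSum w (ladderCut t (.inr e)) 3 = 0 :=
    supersetSum_of_lt_card w (by rw [card_ladderCut_inr]; norm_num)
  simp only [Fintype.sum_sum_type (α₁ := Fin 3 × Bool), hinl, hinr, sum_const_zero, add_zero]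

theorem sum_supersetSum_ladderCut_four :
    ∑ i, supersetSum w (ladderCut t i) 4 +
        ∑ v, (∏ e ∈ ladderCut t (.inl v), w e) * ∑ e ∈ ladderCut t (.inl v), w e =
      (∑ v, ∏ e ∈ ladderCut t (.inl v), w e) * ∑ e, w e +
        ∑ i, ∏ e ∈ ladderCut t (.inr i), w e := by
  have hinl (v : Fin 3 × Bool) := supersetSum_card_succ w (ladderCut t (.inl v))
  have hinr (e : (Fin 3 × Bool) ⊕ Fin 3) :
      supersetSum w (ladderCut t (.inr e)) 4 = ∏ e ∈ ladderCut t (.inr e), w e := by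
    rw [← supersetSum_card, card_ladderCut_inr]
  simp only [card_ladderCut_inl] at hinl
  rw [Fintype.sum_sum_type, sum_mul, ← sum_congr rfl fun v _ => hinl v, sum_add_distrib,
    add_right_comm]
  simp only [hinr]

theorem prod_ladderCut_star (v : Fin 3 × Bool) :
    ∏ e ∈ ladderCut t (.inl v), w e = w (.inl v) * (w (.inl (railPred t v)) * w (.inr v.1)) := by
  have h : v ≠ railPred t v := by revert t v; decide
  simp [ladderCut, h]

theorem sum_ladderCut_star (v : Fin 3 × Bool) :
    ∑ e ∈ ladderCut t (.inl v), w e = w (.inl v) + (w (.inl (railPred t v)) + w (.inr v.1)) := by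
  have h : v ≠ railPred t v := by revert t v; decide
  simp [ladderCut, h]

theorem prod_ladderCut_rail (v : Fin 3 × Bool) :
    ∏ e ∈ ladderCut t (.inr (.inl v)), w e =
      w (.inl (railPred t v)) *
        (w (.inr v.1) * (w (.inl (railSucc t v)) * w (.inr (v.1 + 1)))) := by
  have h : railPred t v ≠ railSucc t v := by revert t v; decide
  simp [ladderCut, h]

theorem prod_ladderCut_rung (k : Fin 3) :
    ∏ e ∈ ladderCut t (.inr (.inr k)), w e =
      w (.inl (k, false)) * (w (.inl (railPred t (k, false))) *
        (w (.inl (k, true)) * w (.inl (railPred t (k, true))))) := by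
  have h : ([.inl (k, false), .inl (railPred t (k, false)), .inl (k, true),
      .inl (railPred t (k, true))] : List ((Fin 3 × Bool) ⊕ Fin 3)).Nodup := by revert t k; decide
  simpa [ladderCut, List.toFinset_cons] using List.prod_toFinset w h

theorem map_univ_ladder : univ.val.map w =
    w (.inl (0, false)) ::ₘ w (.inl (0, true)) ::ₘ w (.inl (1, false)) ::ₘ w (.inl (1, true)) ::ₘ
      w (.inl (2, false)) ::ₘ w (.inl (2, true)) ::ₘ
        w (.inr 0) ::ₘ w (.inr 1) ::ₘ w (.inr 2) ::ₘ 0 := by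
  have h : (univ : Finset ((Fin 3 × Bool) ⊕ Fin 3)).val =
      .inl (0, false) ::ₘ .inl (0, true) ::ₘ .inl (1, false) ::ₘ .inl (1, true) ::ₘ
        .inl (2, false) ::ₘ .inl (2, true) ::ₘ .inr 0 ::ₘ .inr 1 ::ₘ .inr 2 ::ₘ 0 := by decide
  simp only [h, Multiset.map_cons, Multiset.map_zero]

end LadderSums

section ChainSums

variable {k : ℕ} (w : (Fin 3 × Bool) ⊕ Fin 3 → ℕ)

theorem chainSum_twistedPrism_add_sum (hk : k ≤ 4) :
    chainSum (twistedPrism 0) w k + ∑ i, supersetSum w (ladderCut true i) k =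
      (univ.val.map w).esymm k :=
  classifiesCuts_twistedPrism.chainSum_add_sum w hk

theorem chainSum_prism_add_sum (hk : k ≤ 4) :
    chainSum prism w k + (supersetSum w {.inr 0, .inr 1, .inr 2} k +
      ∑ i, supersetSum w (ladderCut false i) k) = (univ.val.map w).esymm k := by
  have h := classifiesCuts_prism.chainSum_add_sum w hk
  rw [Fintype.sum_option] at h
  exact h

theorem chainSum_twistedPrism_of_lt_three (hk : k < 3) :
    chainSum (twistedPrism 0) w k = (univ.val.map w).esymm k := by
  rw [← chainSum_twistedPrism_add_sum w (by lia), sum_supersetSum_ladderCut_eq_zero true w hk,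
    add_zero]

theorem chainSum_prism_of_lt_three (hk : k < 3) :
    chainSum prism w k = (univ.val.map w).esymm k := by
  have hrungs : supersetSum w {.inr 0, .inr 1, .inr 2} k = 0 := supersetSum_of_lt_card w hk
  rw [← chainSum_prism_add_sum w (by lia), sum_supersetSum_ladderCut_eq_zero false w hk, hrungs,
    add_zero, add_zero]

theorem supersetSum_rungs_three :
    supersetSum w {.inr 0, .inr 1, .inr 2} 3 = w (.inr 0) * (w (.inr 1) * w (.inr 2)) := by
  simpa using supersetSum_card w {.inr 0, .inr 1, .inr 2}

theorem supersetSum_rungs_four :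
    supersetSum w {.inr 0, .inr 1, .inr 2} 4 +
        w (.inr 0) * (w (.inr 1) * w (.inr 2)) * (w (.inr 0) + (w (.inr 1) + w (.inr 2))) =
      w (.inr 0) * (w (.inr 1) * w (.inr 2)) * ∑ e, w e := by
  simpa using supersetSum_card_succ w {.inr 0, .inr 1, .inr 2}

end ChainSums

/-- The total length of the two rails numbered `i`. -/
def railSum (w : (Fin 3 × Bool) ⊕ Fin 3 → ℕ) (i : Fin 3) : ℤ :=
  w (.inl (i, false)) + w (.inl (i, true))

/-- The difference of the lengths of the two rails numbered `i`. -/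
def railDiff (w : (Fin 3 × Bool) ⊕ Fin 3 → ℕ) (i : Fin 3) : ℤ :=
  w (.inl (i, false)) - w (.inl (i, true))

section Identities

variable {u w : (Fin 3 × Bool) ⊕ Fin 3 → ℕ} {e : Fin 3 → ℤ}
  (hrung : ∀ i, u (.inr i) = w (.inr i)) (hsum : ∀ i, railSum u i = railSum w i)
  (hdiff : ∀ i, railDiff u i = if i = 1 then -e i else e i)

include hsum in
theorem cast_rail_true (i : Fin 3) :
    (w (.inl (i, true)) : ℤ) = u (.inl (i, false)) + u (.inl (i, true)) - w (.inl (i, false)) := by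
  linear_combination (norm := (simp only [railSum]; ring)) -hsum i

include hdiff in
theorem eq_railDiff (i : Fin 3) : e i = if i = 1 then -railDiff u i else railDiff u i := by
  rw [hdiff]
  split_ifs
  · rw [neg_neg]
  · rfl

include hrung hsum hdiff

theorem four_mul_chainSum_two_sub :
    4 * (chainSum (twistedPrism 0) u 2 - chainSum prism w 2 : ℤ) =
      ∑ i, (railDiff w i ^ 2 - e i ^ 2) := by
  have hu := chainSum_twistedPrism_of_lt_three u (k := 2) (by norm_num)
  have hw := chainSum_prism_of_lt_three w (k := 2) (by norm_num)
  rw [map_univ_ladder] at hu hw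
  simp only [esymm_cons, esymm_zero, zero_esymm_succ] at hu hw
  zify at hu hw
  simp only [← hrung, cast_rail_true hsum] at hw
  simp only [eq_railDiff hdiff, railDiff, cast_rail_true hsum, Fin.sum_univ_three, Fin.isValue,
    Fin.reduceEq, zero_ne_one, ↓reduceIte]
  linear_combination 4 * hu - 4 * hw

theorem four_mul_chainSum_three_sub :
    4 * (chainSum (twistedPrism 0) u 3 - chainSum prism w 3 : ℤ) =
      ∑ i, ((railDiff w i ^ 2 - e i ^ 2) * (railSum w (i + 1) + railSum w (i + 2)) +
        w (.inr (i + 2)) * (((railDiff w (i + 1) + railDiff w (i + 2)) ^ 2 -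
          (e (i + 1) - e (i + 2)) ^ 2) + (railDiff w i ^ 2 - e i ^ 2))) +
      4 * ∏ i, w (.inr i) := by
  have hu := chainSum_twistedPrism_add_sum u (k := 3) (by norm_num)
  have hw := chainSum_prism_add_sum w (k := 3) (by norm_num)
  rw [sum_supersetSum_ladderCut_three, map_univ_ladder] at hu hw
  rw [supersetSum_rungs_three] at hw
  simp only [esymm_cons, esymm_zero, zero_esymm_succ, prod_ladderCut_star, railPred,
    Fintype.sum_prod_type, Fin.sum_univ_three, Fintype.sum_bool, Fin.isValue, Fin.reduceAdd,
    Fin.reduceEq, zero_add, one_ne_zero, decide_true, decide_false, Bool.and_true, Bool.and_false,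
    Bool.bne_true, Bool.bne_false, Bool.not_true, Bool.not_false] at hu hw
  zify at hu hw
  simp only [← hrung, cast_rail_true hsum] at hw
  simp only [← hrung, eq_railDiff hdiff, railDiff, railSum, cast_rail_true hsum,
    Fin.sum_univ_three, Fin.prod_univ_three, Nat.cast_mul, Fin.isValue, Fin.reduceAdd,
    Fin.reduceEq, zero_add, zero_ne_one, ↓reduceIte]
  linear_combination 4 * hu - 4 * hw

theorem four_mul_chainSum_four_sub :
    4 * (chainSum (twistedPrism 0) u 4 - chainSum prism w 4 : ℤ) =
      ∑ i, ((railDiff w i ^ 2 - e i ^ 2) * (railSum w (i + 1) * railSum w (i + 2)) +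
        w (.inr (i + 2)) * (((railDiff w (i + 1) + railDiff w (i + 2)) ^ 2 -
          (e (i + 1) - e (i + 2)) ^ 2) * railSum w i +
            (railDiff w i ^ 2 - e i ^ 2) * (railSum w (i + 1) + railSum w (i + 2)))) +
      (∑ i, w (.inr i) * w (.inr (i + 1)) *
        ((∑ j, railDiff w j) ^ 2 - (e (i + 1) + e (i + 2) - e i) ^ 2) +
      4 * (∏ i, w (.inr i)) * ∑ i, railSum w i) := by
  have hu := chainSum_twistedPrism_add_sum u (k := 4) (by norm_num)
  have hw := chainSum_prism_add_sum w (k := 4) (by norm_num)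
  have hu' := sum_supersetSum_ladderCut_four true u
  have hw' := sum_supersetSum_ladderCut_four false w
  have hr := supersetSum_rungs_four w
  generalize ∑ i, supersetSum u (ladderCut true i) 4 = cutsU at hu hu'
  generalize ∑ i, supersetSum w (ladderCut false i) 4 = cutsW at hw hw'
  generalize supersetSum w {.inr 0, .inr 1, .inr 2} 4 = rungsW at hw hr
  rw [map_univ_ladder] at hu hw
  simp only [esymm_cons, esymm_zero, zero_esymm_succ, prod_ladderCut_star, sum_ladderCut_star,
    prod_ladderCut_rail, prod_ladderCut_rung, railPred, railSucc, Fintype.sum_sum_type,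
    Fintype.sum_prod_type, Fin.sum_univ_three, Fintype.sum_bool, Fin.isValue, Fin.reduceAdd,
    Fin.reduceEq, zero_add, one_ne_zero, decide_true, decide_false, Bool.and_true, Bool.and_false,
    Bool.bne_true, Bool.bne_false, Bool.not_true, Bool.not_false] at hu hw hu' hw' hr
  zify at hu hw hu' hw' hr
  simp only [← hrung, cast_rail_true hsum] at hw hw' hr
  simp only [← hrung, eq_railDiff hdiff, railDiff, railSum, cast_rail_true hsum,
    Fin.sum_univ_three, Fin.prod_univ_three, Nat.cast_mul, Fin.isValue, Fin.reduceAdd,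
    Fin.reduceEq, zero_add, zero_ne_one, ↓reduceIte]
  linear_combination 4 * hu - 4 * hw - 4 * hu' + 4 * hw' + 4 * hr

end Identities

/-- The lengths on `twistedPrism 0` in which the two rails numbered `i` share their total length as
evenly as possible; of the rails made longer by rounding, that with `i = 1` lies opposite to the
other two. -/
def balance (w : (Fin 3 × Bool) ⊕ Fin 3 → ℕ) : (Fin 3 × Bool) ⊕ Fin 3 → ℕ
  | .inl (i, b) => (w (.inl (i, false)) + w (.inl (i, true)) +
      if b = decide (i = 1) then 1 else 0) / 2
  | .inr i => w (.inr i)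

theorem sq_le_sq_of_two_dvd_sub {x c : ℤ} (hc : -1 ≤ c ∧ c ≤ 1) (h : 2 ∣ x - c) :
    c ^ 2 ≤ x ^ 2 := by
  rw [← Int.natAbs_le_iff_sq_le]
  omega

section Inequalities

variable (w : (Fin 3 × Bool) ⊕ Fin 3 → ℕ)

theorem railSum_balance (i : Fin 3) : railSum (balance w) i = railSum w i := by
  simp only [railSum, balance]
  by_cases h : i = 1 <;> simp [h] <;> omega

theorem railDiff_balance (i : Fin 3) :
    railDiff (balance w) i = if i = 1 then -(railSum w i % 2) else railSum w i % 2 := by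
  simp only [railSum, railDiff, balance]
  by_cases h : i = 1 <;> simp [h] <;> omega

theorem railSum_nonneg (i : Fin 3) : 0 ≤ railSum w i := by
  unfold railSum
  positivity

theorem sq_railSum_emod_two_le (i : Fin 3) : (railSum w i % 2) ^ 2 ≤ railDiff w i ^ 2 :=
  sq_le_sq_of_two_dvd_sub (by omega) (by unfold railSum railDiff; omega)

theorem sq_railSum_emod_two_sub_le (i j : Fin 3) :
    (railSum w i % 2 - railSum w j % 2) ^ 2 ≤ (railDiff w i + railDiff w j) ^ 2 :=
  sq_le_sq_of_two_dvd_sub (by omega) (by unfold railSum railDiff; omega)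

end Inequalities

/-- Among the residues of three integers modulo 2, the excess of those other than the `i`-th over
the `i`-th. -/
def residueExcess (S : Fin 3 → ℤ) (i : Fin 3) : ℤ := S (i + 1) % 2 + S (i + 2) % 2 - S i % 2

section ResidueExcess

variable {S r : Fin 3 → ℤ} {x : ℤ}

theorem neg_ite_residueExcess_eq_two_le (hx : 2 ∣ x - ∑ i, S i) (i : Fin 3) :
    -4 * (if residueExcess S i = 2 then 1 else 0) ≤ x ^ 2 - residueExcess S i ^ 2 := by
  split_ifs with h
  · rw [h]
    linarith [sq_nonneg x]
  · have hdvd : 2 ∣ x - residueExcess S i := by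
      unfold residueExcess
      rw [Fin.sum_univ_three] at hx
      fin_cases i <;> simp <;> omega
    have := sq_le_sq_of_two_dvd_sub (by unfold residueExcess at h ⊢; omega) hdvd
    linarith

theorem sum_ite_residueExcess_eq_two_lt (hS : ∀ i, 0 ≤ S i) (hpos : 0 < ∑ i, S i) :
    ∑ i, (if residueExcess S i = 2 then 1 else 0) < ∑ i, S i := by
  have := hS 0
  have := hS 1
  have := hS 2
  simp only [residueExcess, Fin.sum_univ_three, Fin.isValue, Fin.reduceAdd, zero_add] at hpos ⊢
  split_ifs <;> omega

/- By parity the `i`-th difference of squares is nonnegative unless `S i` is even and the other two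
sums are odd, when it is at least `-4`. This happens for at most one `i`, and then `2 ≤ ∑ i, S i`,
whereas the weight `r i * r (i + 1)` is at most `∏ i, r i`. -/
theorem neg_lt_sum_mul_sq_sub_sq_residueExcess (hr : ∀ i, 0 < r i) (hS : ∀ i, 0 ≤ S i)
    (hpos : 0 < ∑ i, S i) (hx : 2 ∣ x - ∑ i, S i) :
    -(4 * (∏ i, r i) * ∑ i, S i) <
      ∑ i, r i * r (i + 1) * (x ^ 2 - residueExcess S i ^ 2) := by
  have hprod (i : Fin 3) : r i * r (i + 1) ≤ ∏ j, r j := by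
    have h : ∏ j, r j = r i * r (i + 1) * r (i + 2) := by
      rw [Fin.prod_univ_three]
      fin_cases i <;> simp <;> ring
    rw [h]
    exact le_mul_of_one_le_right (mul_pos (hr _) (hr _)).le (hr _)
  calc
    -(4 * (∏ i, r i) * ∑ i, S i)
      < -(4 * (∏ i, r i) * ∑ i, if residueExcess S i = 2 then 1 else 0) := by
        refine neg_lt_neg (mul_lt_mul_of_pos_left (sum_ite_residueExcess_eq_two_lt hS hpos) ?_)
        exact mul_pos four_pos (prod_pos fun i _ => hr i)
    _ = ∑ i, (∏ j, r j) * (-4 * if residueExcess S i = 2 then 1 else 0) := by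
        rw [← mul_sum, ← mul_sum]
        ring
    _ ≤ ∑ i, r i * r (i + 1) * (-4 * if residueExcess S i = 2 then 1 else 0) := by
        refine sum_le_sum fun i _ => mul_le_mul_of_nonpos_right (hprod i) ?_
        split_ifs <;> norm_num
    _ ≤ _ := by
        refine sum_le_sum fun i _ => mul_le_mul_of_nonneg_left
          (neg_ite_residueExcess_eq_two_le hx i) (mul_pos (hr _) (hr _)).le

end ResidueExcess

section Balancing

variable (w : (Fin 3 × Bool) ⊕ Fin 3 → ℕ)

theorem chainSum_prism_two_le : chainSum prism w 2 ≤ chainSum (twistedPrism 0) (balance w) 2 := by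
  have h := four_mul_chainSum_two_sub (u := balance w) (w := w) (fun _ => rfl) (railSum_balance w)
    (railDiff_balance w)
  have : 0 ≤ ∑ i, (railDiff w i ^ 2 - (railSum w i % 2) ^ 2) :=
    sum_nonneg fun i _ => sub_nonneg.2 (sq_railSum_emod_two_le w i)
  lia

variable {w}

theorem chainSum_prism_three_lt (hr : ∀ i, 0 < w (.inr i)) :
    chainSum prism w 3 < chainSum (twistedPrism 0) (balance w) 3 := by
  have h := four_mul_chainSum_three_sub (u := balance w) (w := w) (fun _ => rfl)
    (railSum_balance w) (railDiff_balance w)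
  have hS := railSum_nonneg w
  have hD (i : Fin 3) := sub_nonneg.2 (sq_railSum_emod_two_le w i)
  have hX (i j : Fin 3) := sub_nonneg.2 (sq_railSum_emod_two_sub_le w i j)
  have : 0 < 4 * ∏ i, (w (.inr i) : ℤ) :=
    mul_pos four_pos (prod_pos fun i _ => mod_cast hr i)
  have := sum_nonneg fun i (_ : i ∈ univ) => add_nonneg (mul_nonneg (hD i)
    (add_nonneg (hS (i + 1)) (hS (i + 2)))) (mul_nonneg (Nat.cast_nonneg (w (.inr (i + 2))))
      (add_nonneg (hX (i + 1) (i + 2)) (hD i)))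
  push_cast at h
  lia

theorem chainSum_prism_four_lt (hr : ∀ i, 0 < w (.inr i)) (hpos : 0 < ∑ i, railSum w i) :
    chainSum prism w 4 < chainSum (twistedPrism 0) (balance w) 4 := by
  have h := four_mul_chainSum_four_sub (u := balance w) (w := w) (fun _ => rfl)
    (railSum_balance w) (railDiff_balance w)
  have hS := railSum_nonneg w
  have hD (i : Fin 3) := sub_nonneg.2 (sq_railSum_emod_two_le w i)
  have hX (i j : Fin 3) := sub_nonneg.2 (sq_railSum_emod_two_sub_le w i j)
  have hpar : 2 ∣ ∑ i, railDiff w i - ∑ i, railSum w i := by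
    simp only [Fin.sum_univ_three, railSum, railDiff]
    omega
  have hY := neg_lt_sum_mul_sq_sub_sq_residueExcess (r := fun i => w (.inr i))
    (fun i => mod_cast hr i) hS hpos hpar
  have := sum_nonneg fun i (_ : i ∈ univ) => add_nonneg (mul_nonneg (hD i)
    (mul_nonneg (hS (i + 1)) (hS (i + 2)))) (mul_nonneg (Nat.cast_nonneg (w (.inr (i + 2))))
      (add_nonneg (mul_nonneg (hX (i + 1) (i + 2)) (hS i))
        (mul_nonneg (hD i) (add_nonneg (hS (i + 1)) (hS (i + 2))))))
  push_cast at h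
  unfold residueExcess at hY
  lia

end Balancing

section Optimality

variable {G G' D D' : Multigraph}

theorem IsWeakSubdivision.nE_eq {w : D.E → ℕ} (hG : IsWeakSubdivision G D w) :
    G.nE = ∑ e, w e := by
  obtain ⟨-, ⟨φ⟩⟩ := hG
  rw [φ.nE_eq, nE_subdivide]

theorem IsWeakSubdivision.d_add_chainSum {w : D.E → ℕ} (hG : IsWeakSubdivision G D w) (i : ℕ) :
    G.d i + chainSum D w i = G.nE.choose i := by
  obtain ⟨-, ⟨φ⟩⟩ := hG
  rw [← card_nonDisconnections_subdivide, ← φ.card_nonDisconnections_eq,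
    G.d_add_card_nonDisconnections]

theorem IsWeakSubdivision.d_le_d_iff {w : D.E → ℕ} {w' : D'.E → ℕ}
    (hG : IsWeakSubdivision G D w) (hG' : IsWeakSubdivision G' D' w') (hE : G'.nE = G.nE) (i : ℕ) :
    G'.d i ≤ G.d i ↔ chainSum D w i ≤ chainSum D' w' i := by
  have h := hG.d_add_chainSum i
  have h' := hG'.d_add_chainSum i
  rw [hE] at h'
  lia

theorem IsWeakSubdivision.d_lt_d_iff {w : D.E → ℕ} {w' : D'.E → ℕ}
    (hG : IsWeakSubdivision G D w) (hG' : IsWeakSubdivision G' D' w') (hE : G'.nE = G.nE) (i : ℕ) :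
    G'.d i < G.d i ↔ chainSum D w i < chainSum D' w' i := by
  rw [← not_le, ← not_le, hG'.d_le_d_iff hG hE.symm]

theorem isWeakSubdivision_subdivide {w : D.E → ℕ} (hw : ZeroAcyclic D w) :
    IsWeakSubdivision (subdivide D w) D w :=
  ⟨hw, ⟨⟨.refl _, .refl _, fun _ => .inl ⟨rfl, rfl⟩⟩⟩⟩

theorem connected_subdivide {w : D.E → ℕ} (h : 0 < chainSum D w 0) :
    (subdivide D w).Connected := by
  rw [← card_nonDisconnections_subdivide] at h
  obtain ⟨F, hF⟩ := card_pos.1 h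
  obtain ⟨hF₀, hconn⟩ := Multigraph.mem_nonDisconnections.1 hF
  rwa [card_eq_zero.1 hF₀, sdiff_empty] at hconn

theorem ZeroAcyclic.card_lt_nV [Nonempty D.V] {w : D.E → ℕ} (hw : ZeroAcyclic D w)
    {s : Finset D.E} (hs : ∀ e ∈ s, w e = 0) : #s < D.nV := by
  have hcard : 0 < Fintype.card (Quot (zeroRel D w)) :=
    Fintype.card_pos_iff.2 ⟨Quot.mk _ (Classical.arbitrary D.V)⟩
  have hle : #s ≤ #{e | w e = 0} := card_le_card fun e he => mem_filter.2 ⟨mem_univ _, hs e he⟩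
  rw [ZeroAcyclic, ← Multigraph.nV] at hw
  lia

variable {w : prism.E → ℕ}

theorem ZeroAcyclic.sum_railSum_pos (hw : ZeroAcyclic prism w) : 0 < ∑ i, railSum w i := by
  by_contra! hle
  have hzero (e : Fin 3 × Bool) : w (.inl e) = 0 := by
    have hsum := (sum_nonneg fun i _ => railSum_nonneg w i).antisymm' hle
    have hi := (sum_eq_zero_iff_of_nonneg fun i _ => railSum_nonneg w i).1 hsum e.1 (mem_univ _)
    unfold railSum at hi
    obtain ⟨i, b⟩ := e
    cases b <;> lia
  have : Nonempty prism.V := ⟨(0, false)⟩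
  have hlt : #((univ : Finset (Fin 3 × Bool)).map Function.Embedding.inl) < prism.nV :=
    hw.card_lt_nV fun e he => by
      obtain ⟨e, -, rfl⟩ := mem_map.1 he
      exact hzero e
  rw [card_map] at hlt
  exact hlt.false

theorem sum_balance (w : (Fin 3 × Bool) ⊕ Fin 3 → ℕ) : ∑ e, balance w e = ∑ e, w e := by
  rw [Fintype.sum_sum_type, Fintype.sum_sum_type, Fintype.sum_prod_type, Fintype.sum_prod_type]
  congr 1
  refine sum_congr rfl fun i _ => ?_
  have := railSum_balance w i
  simp only [railSum] at this
  rw [Fintype.sum_bool, Fintype.sum_bool]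
  lia

theorem chainSum_prism_le (hw : ZeroAcyclic prism w) (hr : ∀ i, 0 < w (.inr i)) (i : ℕ) :
    chainSum prism w i ≤ chainSum (twistedPrism 0) (balance w) i := by
  match i with
  | 0 =>
    rw [chainSum_prism_of_lt_three w zero_lt_three,
      chainSum_twistedPrism_of_lt_three _ zero_lt_three, esymm_zero, esymm_zero]
  | 1 =>
    rw [chainSum_prism_of_lt_three w (by norm_num),
      chainSum_twistedPrism_of_lt_three _ (by norm_num), esymm_one, esymm_one]
    exact (sum_balance w).ge
  | 2 => exact chainSum_prism_two_le w
  | 3 => exact (chainSum_prism_three_lt hr).le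
  | 4 => exact (chainSum_prism_four_lt hr hw.sum_railSum_pos).le
  | i + 5 =>
    rw [chainSum_eq_zero]
    · exact Nat.zero_le _
    · change 9 + 1 < 6 + (i + 5)
      lia

theorem zeroAcyclic_twistedPrism_balance (hw : ZeroAcyclic prism w) (hr : ∀ i, 0 < w (.inr i)) :
    ZeroAcyclic (twistedPrism 0) (balance w) :=
  zeroAcyclic_of_chainSum_pos (i := 4) rfl
    ((Nat.zero_le _).trans_lt (chainSum_prism_four_lt hr hw.sum_railSum_pos))

theorem memG_subdivide_twistedPrism_balance {n : ℕ} (hG : memG G n (n + 3))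
    (hsub : IsWeakSubdivision G prism w) (hr : ∀ i, 0 < w (.inr i)) :
    memG (subdivide (twistedPrism 0) (balance w)) n (n + 3) := by
  have hw : ∑ e, w e = n + 3 := hsub.nE_eq.symm.trans hG.2.1
  have hsum : ∑ e, balance w e = n + 3 := (sum_balance w).trans hw
  refine ⟨?_, (nE_subdivide _ _).trans hsum, connected_subdivide ?_⟩
  · have hV : _ + 9 = 6 + ∑ e, balance w e :=
      nV_subdivide (zeroAcyclic_twistedPrism_balance hsub.1 hr)
    lia
  · rw [chainSum_twistedPrism_of_lt_three _ zero_lt_three, esymm_zero]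
    exact one_pos

end Optimality

/-- a weak Π₃-subdivision G ∈ 𝒢_{n,n+3} is not a weak K_{3,3}-subdivision
iff all three rung chains are positive; in that case some weak K_{3,3}-subdivision
G' ∈ 𝒢_{n,n+3} satisfies d₂(G') ≤ d₂(G), d₃(G') < d₃(G), d₄(G') < d₄(G); in
particular G is not p-optimal for any p. -/
theorem prism_subdivision_not_optimal (n : ℕ) (hn : 2 ≤ n)
    (G : Multigraph) (hG : memG G n (n + 3))
    (w : prism.E → ℕ) (hsub : IsWeakSubdivision G prism w) :
    ((¬ ∃ w' : K33.E → ℕ, IsWeakSubdivision G K33 w') ↔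
      (∀ i : Fin 3, 0 < w (Sum.inr i))) ∧
    ((∀ i : Fin 3, 0 < w (Sum.inr i)) →
      (∃ G' : Multigraph, memG G' n (n + 3) ∧
        (∃ w' : K33.E → ℕ, IsWeakSubdivision G' K33 w') ∧
        G'.d 2 ≤ G.d 2 ∧ G'.d 3 < G.d 3 ∧ G'.d 4 < G.d 4) ∧
      (∀ p : ℝ, 0 < p → p < 1 → ¬ pOptimal G n (n + 3) p)) := by
  refine ⟨hsub.not_exists_K33_iff, fun hr => ?_⟩
  have hG' := memG_subdivide_twistedPrism_balance hG hsub hr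
  have hsub' := isWeakSubdivision_subdivide (zeroAcyclic_twistedPrism_balance hsub.1 hr)
  set G' := subdivide (twistedPrism 0) (balance w)
  have hE : G'.nE = G.nE := hG'.2.1.trans hG.2.1.symm
  have hle (i : ℕ) : G'.d i ≤ G.d i :=
    (hsub.d_le_d_iff hsub' hE i).2 (chainSum_prism_le hsub.1 hr i)
  have hlt₃ : G'.d 3 < G.d 3 := (hsub.d_lt_d_iff hsub' hE 3).2 (chainSum_prism_three_lt hr)
  have hlt₄ : G'.d 4 < G.d 4 :=
    (hsub.d_lt_d_iff hsub' hE 4).2 (chainSum_prism_four_lt hr hsub.1.sum_railSum_pos)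
  refine ⟨⟨G', hG', exists_isWeakSubdivision_K33_of_twistedPrism hsub', hle 2, hlt₃, hlt₄⟩,
    fun p hp₀ hp₁ hopt => ?_⟩
  exact (hopt.2 G' hG').not_gt (Multigraph.rel_lt_rel_of_d_le hE hle hlt₃ hp₀ hp₁)
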